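/- arXiv:0903.5519 — 13 statements merged into one kernel-verified Lean document; each statement's English description precedes it below -/
import Mathlib

section
/- Let d ∈ [−3/4, −1/2] and let x, y be real numbers with 1 ≥ x ≥ y ≥ d−x−y ≥ −d−1. Then the quintuple (1, x, y, d−x−y, −d−1) is symmetrically realizable, i.e., there exists a 5×5 real symmetric matrix with all entries nonnegative (necessarily of trace zero) whose characteristic polynomial is (t−1)(t−x)(t−y)(t−(d−x−y))(t+d+1). -/
open Polynomial Matrix

/-!
The matrix is assembled from `1 × 1` zero matrices by Fiedler's gluing. Let `A` and `B` be
symmetric nonnegative matrices with nonnegative unit eigenvectors `u`, `v` for the eigenvalues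
`α`, `β`. Filling the off-diagonal blocks of `A ⊕ B` with `σ u vᵀ` and its transpose replaces
`α`, `β` by the eigenvalues of the `2 × 2` matrix with diagonal `α`, `β` and off-diagonal
entries `σ`, and keeps the rest of the spectrum. For `σ² = ε (α + ε - β)` these eigenvalues are
`α + ε` and `β - ε`, and `α + ε` has again a nonnegative unit eigenvector.

Gluing `(0)` with `(0)` gives the spectrum `(b, -b)`, gluing that with `(0)` gives
`(b + c, -c, -b)`, and gluing the result with `(a, -a)` gives `(ρ, a + b + c - ρ, -c, -b, -a)`.
The theorem is the case `ρ = 1`, `a = d + 1`, `b = -(d - x - y)`, `c = -y`.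
-/

section Rado

variable {R m r : Type*} [Fintype m] [Fintype r] [DecidableEq r]

section CommSemiring

variable [CommSemiring R]

theorem mulVec_dotProduct_mulVec_of_transpose_mul_self {U : Matrix m r R} (hU : Uᵀ * U = 1)
    (p : r → R) : U *ᵥ p ⬝ᵥ U *ᵥ p = p ⬝ᵥ p := by
  rw [dotProduct_mulVec, vecMul_mulVec, hU, vecMul_one]

theorem add_mul_mul_transpose_mulVec_mulVec {D : Matrix m m R} {U : Matrix m r R}
    {K : Matrix r r R} (hDU : D * U = U * K) (hU : Uᵀ * U = 1) (S : Matrix r r R) (p : r → R) :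
    (D + U * (S * Uᵀ)) *ᵥ (U *ᵥ p) = U *ᵥ ((K + S) *ᵥ p) := by
  simp only [mulVec_mulVec, Matrix.add_mul, Matrix.mul_add, Matrix.mul_assoc, hDU, hU,
    Matrix.mul_one]

end CommSemiring

variable [CommRing R] [DecidableEq m]

theorem charmatrix_add (M N : Matrix m m R) :
    (M + N).charmatrix = M.charmatrix + -N.map C := by
  simp only [charmatrix, map_add, RingHom.mapMatrix_apply, sub_eq_add_neg, neg_add, add_assoc]

theorem det_add_mul_mul_det {D : Matrix m m R} {U : Matrix m r R} {K : Matrix r r R}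
    (hDU : D * U = U * K) (W : Matrix r m R) :
    (D + U * W).det * K.det = D.det * (K + W * U).det := by
  have block_mul : fromBlocks D (-U) W 1 * fromBlocks 1 U 0 K = fromBlocks D 0 W (K + W * U) := by
    simp [fromBlocks_multiply, hDU, add_comm]
  simpa [det_fromBlocks_one₂₂] using congrArg det block_mul

theorem charmatrix_mul_map_C {D : Matrix m m R} {U : Matrix m r R} {K : Matrix r r R}
    (hDU : D * U = U * K) : D.charmatrix * U.map C = U.map C * K.charmatrix := by
  have hC : D.map C * U.map C = U.map C * K.map C := by
    rw [← Matrix.map_mul, hDU, Matrix.map_mul]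
  simp [charmatrix, Matrix.sub_mul, Matrix.mul_sub, hC, ← smul_eq_diagonal_mul,
    ← smul_eq_mul_diagonal]

/-- Rado's perturbation theorem. -/
theorem charpoly_add_mul_mul_charpoly {D : Matrix m m R} {U : Matrix m r R} {K : Matrix r r R}
    (hDU : D * U = U * K) (W : Matrix r m R) :
    (D + U * W).charpoly * K.charpoly = D.charpoly * (K + W * U).charpoly := by
  simpa only [charpoly, charmatrix_add, Matrix.map_mul, Matrix.mul_neg, Matrix.neg_mul] using
    det_add_mul_mul_det (charmatrix_mul_map_C hDU) (-W.map C)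

end Rado

section Nonneg

variable {l m n R : Type*} [Fintype m] [Semiring R] [PartialOrder R] [IsOrderedRing R]

theorem matrix_mul_nonneg {M : Matrix l m R} {N : Matrix m n R} (hM : ∀ i j, 0 ≤ M i j)
    (hN : ∀ i j, 0 ≤ N i j) (i : l) (j : n) : 0 ≤ (M * N) i j :=
  Finset.sum_nonneg fun k _ => mul_nonneg (hM i k) (hN k j)

theorem mulVec_nonneg {M : Matrix l m R} {p : m → R} (hM : ∀ i j, 0 ≤ M i j)
    (hp : ∀ j, 0 ≤ p j) (i : l) : 0 ≤ (M *ᵥ p) i :=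
  Finset.sum_nonneg fun j _ => mul_nonneg (hM i j) (hp j)

end Nonneg

section TwoByTwo

theorem charpoly_two_by_two_of_sq_eq {R : Type*} [CommRing R] [Nontrivial R] {α β ε σ : R}
    (hσ : σ ^ 2 = ε * (α + ε - β)) :
    (!![α, σ; σ, β]).charpoly = (X - C (α + ε)) * (X - C (β - ε)) := by
  have det_eq : (!![α, σ; σ, β]).det = (α + ε) * (β - ε) := by
    rw [det_fin_two_of]
    linear_combination -hσ
  rw [charpoly_fin_two, det_eq, trace_fin_two_of]
  simp only [map_add, map_sub, map_mul]
  ring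

/-- Up to normalization the eigenvector is `(√(α + ε - β), √ε)`; every nonnegative unit vector
serves when both entries vanish. -/
theorem exists_nonneg_unit_eigenvector_two_by_two {α β ε : ℝ} (hε : 0 ≤ ε) (hβ : β ≤ α + ε) :
    ∃ p : Fin 2 → ℝ, (∀ i, 0 ≤ p i) ∧ p ⬝ᵥ p = 1 ∧
      !![α, √(ε * (α + ε - β)); √(ε * (α + ε - β)), β] *ᵥ p = (α + ε) • p := by
  obtain ⟨w, hw, hwβ⟩ : ∃ w, 0 ≤ w ∧ w ^ 2 = α + ε - β :=
    ⟨√(α + ε - β), Real.sqrt_nonneg _, Real.sq_sqrt (by linarith)⟩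
  obtain ⟨e, he, rfl⟩ : ∃ e, 0 ≤ e ∧ e ^ 2 = ε := ⟨√ε, Real.sqrt_nonneg _, Real.sq_sqrt hε⟩
  obtain rfl : β = α + e ^ 2 - w ^ 2 := by linarith
  rw [← hwβ, ← mul_pow, Real.sqrt_sq (mul_nonneg he hw)]
  have eigen (x y : ℝ) (hxy : w * y = e * x) :
      !![α, e * w; e * w, α + e ^ 2 - w ^ 2] *ᵥ ![x, y] = (α + e ^ 2) • ![x, y] := by
    have fst : x * α + y * (e * w) = (α + e ^ 2) * x := by linear_combination e * hxy
    have snd : x * (e * w) + y * (α + e ^ 2 - w ^ 2) = (α + e ^ 2) * y := by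
      linear_combination -w * hxy
    simp [funext_iff, Fin.forall_fin_two, fst, snd]
  rcases (add_nonneg (sq_nonneg w) (sq_nonneg e)).eq_or_lt' with hzero | hpos
  · obtain ⟨rfl, rfl⟩ : w = 0 ∧ e = 0 := by
      simpa using (add_eq_zero_iff_of_nonneg (sq_nonneg w) (sq_nonneg e)).1 hzero
    exact ⟨![1, 0], by simp [Fin.forall_fin_two], by simp, eigen 1 0 (by simp)⟩
  · refine ⟨![w / √(w ^ 2 + e ^ 2), e / √(w ^ 2 + e ^ 2)], ?_, ?_, eigen _ _ (by ring)⟩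
    · simp only [Fin.forall_fin_two, cons_val_zero, cons_val_one]
      constructor <;> positivity
    · simp only [vec2_dotProduct, cons_val_zero, cons_val_one]
      rw [← sq, ← sq, div_pow, div_pow, Real.sq_sqrt hpos.le, ← add_div, div_self hpos.ne']

end TwoByTwo

section SumCols

variable {ι κ R : Type*}

/-- The matrix with the two columns `(u, 0)` and `(0, v)`: it spans the plane in which two
matrices with eigenvectors `u` and `v` are glued. -/
def sumCols [Zero R] (u : ι → R) (v : κ → R) : Matrix (ι ⊕ κ) (Fin 2) R :=
  of (Sum.elim (fun i => ![u i, 0]) fun j => ![0, v j])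

theorem sumCols_nonneg [Zero R] [Preorder R] {u : ι → R} {v : κ → R} (hu : ∀ i, 0 ≤ u i)
    (hv : ∀ j, 0 ≤ v j) (i : ι ⊕ κ) (j : Fin 2) : 0 ≤ sumCols u v i j := by
  cases i <;> fin_cases j <;> simp [sumCols, hu, hv]

variable [CommSemiring R] [Fintype ι] [Fintype κ] {u : ι → R} {v : κ → R}

theorem transpose_sumCols_mul_sumCols (hu : u ⬝ᵥ u = 1) (hv : v ⬝ᵥ v = 1) :
    (sumCols u v)ᵀ * sumCols u v = 1 := by
  ext i j
  fin_cases i <;> fin_cases j <;> simp_all [sumCols, Matrix.mul_apply, dotProduct]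

theorem fromBlocks_mul_sumCols {A : Matrix ι ι R} {B : Matrix κ κ R} {α β : R}
    (hu : A *ᵥ u = α • u) (hv : B *ᵥ v = β • v) :
    fromBlocks A 0 0 B * sumCols u v = sumCols u v * diagonal ![α, β] := by
  have hu_apply (i : ι) : ∑ k, A i k * u k = u i * α := (congrFun hu i).trans (mul_comm ..)
  have hv_apply (j : κ) : ∑ k, B j k * v k = v j * β := (congrFun hv j).trans (mul_comm ..)
  ext i j
  cases i <;> fin_cases j <;> simp [sumCols, Matrix.mul_apply, hu_apply, hv_apply]

end SumCols

/-- `A` is a symmetric nonnegative matrix whose eigenvalues are `ρ` and the elements of `s`,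
counted with multiplicity. A nonnegative unit eigenvector `u` for `ρ` is part of the data
because gluing two such matrices needs one from each of them. -/
structure IsPerronRealization {ι : Type*} [Fintype ι] [DecidableEq ι] (A : Matrix ι ι ℝ)
    (u : ι → ℝ) (ρ : ℝ) (s : Multiset ℝ) : Prop where
  isSymm : A.IsSymm
  nonneg : ∀ i j, 0 ≤ A i j
  vec_nonneg : ∀ i, 0 ≤ u i
  dotProduct_self : u ⬝ᵥ u = 1
  mulVec_eq : A *ᵥ u = ρ • u
  charpoly_eq : A.charpoly = (X - C ρ) * (s.map fun x => X - C x).prod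

namespace IsPerronRealization

variable {ι κ : Type*} [Fintype ι] [DecidableEq ι] [Fintype κ] [DecidableEq κ]

theorem exists_fin {A : Matrix ι ι ℝ} {u : ι → ℝ} {ρ : ℝ} {s : Multiset ℝ}
    (hA : IsPerronRealization A u ρ s) {n : ℕ} (hn : Fintype.card ι = n) :
    ∃ M : Matrix (Fin n) (Fin n) ℝ, M.IsSymm ∧ (∀ i j, 0 ≤ M i j) ∧
      M.charpoly = (X - C ρ) * (s.map fun x => X - C x).prod :=
  let e := Fintype.equivFinOfCardEq hn
  ⟨reindex e e A, hA.isSymm.reindex e, fun _ _ => hA.nonneg _ _,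
    (charpoly_reindex e A).trans hA.charpoly_eq⟩

theorem zero_unit : IsPerronRealization (0 : Matrix Unit Unit ℝ) 1 0 0 where
  isSymm := isSymm_zero
  nonneg _ _ := le_rfl
  vec_nonneg _ := zero_le_one
  dotProduct_self := by simp
  mulVec_eq := by simp
  charpoly_eq := by simp

/-- Fiedler's gluing theorem. -/
theorem exists_glue {A : Matrix ι ι ℝ} {B : Matrix κ κ ℝ} {u : ι → ℝ} {v : κ → ℝ} {α β ε : ℝ}
    {s t : Multiset ℝ} (hA : IsPerronRealization A u α s) (hB : IsPerronRealization B v β t)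
    (hε : 0 ≤ ε) (hβ : β ≤ α + ε) :
    ∃ (M : Matrix (ι ⊕ κ) (ι ⊕ κ) ℝ) (w : ι ⊕ κ → ℝ),
      IsPerronRealization M w (α + ε) ((β - ε) ::ₘ (s + t)) := by
  obtain ⟨p, hp, hp_unit, hp_eigen⟩ := exists_nonneg_unit_eigenvector_two_by_two hε hβ
  set σ := √(ε * (α + ε - β))
  have hσ : σ ^ 2 = ε * (α + ε - β) := Real.sq_sqrt (mul_nonneg hε (by linarith))
  let S : Matrix (Fin 2) (Fin 2) ℝ := !![0, σ; σ, 0]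
  have hS_nonneg : ∀ i j, 0 ≤ S i j := by simp [S, σ, Fin.forall_fin_two]
  have hS_symm : S.IsSymm := IsSymm.ext <| by simp [S, Fin.forall_fin_two]
  have hKS : diagonal ![α, β] + S = !![α, σ; σ, β] := by
    ext i j
    fin_cases i <;> fin_cases j <;> simp [S]
  have hU_nonneg := sumCols_nonneg hA.vec_nonneg hB.vec_nonneg
  have hU := transpose_sumCols_mul_sumCols hA.dotProduct_self hB.dotProduct_self
  have hDU := fromBlocks_mul_sumCols hA.mulVec_eq hB.mulVec_eq
  set U := sumCols u v
  exact ⟨fromBlocks A 0 0 B + U * (S * Uᵀ), U *ᵥ p,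
  { isSymm := (hA.isSymm.fromBlocks transpose_zero hB.isSymm).add <| by
      simp [IsSymm, hS_symm.eq, Matrix.mul_assoc]
    nonneg i j := add_nonneg (by cases i <;> cases j <;> simp [hA.nonneg, hB.nonneg])
      (matrix_mul_nonneg hU_nonneg (matrix_mul_nonneg hS_nonneg fun _ _ => hU_nonneg _ _) i j)
    vec_nonneg := mulVec_nonneg hU_nonneg hp
    dotProduct_self := by rw [mulVec_dotProduct_mulVec_of_transpose_mul_self hU, hp_unit]
    mulVec_eq := by
      rw [add_mul_mul_transpose_mulVec_mulVec hDU hU, hKS, hp_eigen, mulVec_smul]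
    charpoly_eq := by
      have rado := charpoly_add_mul_mul_charpoly hDU (S * Uᵀ)
      rw [Matrix.mul_assoc, hU, Matrix.mul_one, hKS, charpoly_two_by_two_of_sq_eq hσ,
        charpoly_fromBlocks_zero₁₂, hA.charpoly_eq, hB.charpoly_eq] at rado
      refine mul_right_cancel₀ (charpoly_monic (diagonal ![α, β])).ne_zero (rado.trans ?_)
      simp only [Multiset.map_cons, Multiset.map_add, Multiset.prod_cons, Multiset.prod_add,
        charpoly_diagonal, Fin.prod_univ_two, cons_val_zero, cons_val_one]
      ring }⟩

theorem exists_pair {a : ℝ} (ha : 0 ≤ a) :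
    ∃ (A : Matrix (Unit ⊕ Unit) (Unit ⊕ Unit) ℝ) (u : Unit ⊕ Unit → ℝ),
      IsPerronRealization A u a {-a} := by
  simpa using zero_unit.exists_glue zero_unit ha (by simpa using ha)

theorem exists_triple {b c : ℝ} (hb : 0 ≤ b) (hc : 0 ≤ c) :
    ∃ (A : Matrix ((Unit ⊕ Unit) ⊕ Unit) ((Unit ⊕ Unit) ⊕ Unit) ℝ)
      (u : (Unit ⊕ Unit) ⊕ Unit → ℝ), IsPerronRealization A u (b + c) {-c, -b} := by
  obtain ⟨A, u, hA⟩ := exists_pair hb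
  simpa using hA.exists_glue zero_unit hc (add_nonneg hb hc)

end IsPerronRealization

theorem stmt_1_general {ρ a b c : ℝ} (ha : 0 ≤ a) (hb : 0 ≤ b) (hc : 0 ≤ c) (haρ : a ≤ ρ)
    (hbcρ : b + c ≤ ρ) :
    ∃ A : Matrix (Fin 5) (Fin 5) ℝ, A.IsSymm ∧ (∀ i j, 0 ≤ A i j) ∧
      A.charpoly =
        (X - C ρ) * (X - C (a + b + c - ρ)) * (X + C c) * (X + C b) * (X + C a) := by
  obtain ⟨B, u, hB⟩ := IsPerronRealization.exists_triple hb hc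
  obtain ⟨D, v, hD⟩ := IsPerronRealization.exists_pair ha
  obtain ⟨M, w, hM⟩ := hB.exists_glue hD (sub_nonneg.2 hbcρ) (by linarith)
  obtain ⟨A, hA_symm, hA_nonneg, hA_charpoly⟩ := hM.exists_fin (n := 5) rfl
  refine ⟨A, hA_symm, hA_nonneg, hA_charpoly.trans ?_⟩
  simp only [add_sub_cancel, Multiset.insert_eq_cons, Multiset.cons_add, Multiset.singleton_add,
    Multiset.map_cons, Multiset.map_singleton, Multiset.prod_cons, Multiset.prod_singleton,
    map_sub, map_add, map_neg]
  ring

theorem stmt_1 (d x y : ℝ) (hd : d ∈ Set.Icc (-3/4 : ℝ) (-1/2 : ℝ))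
    (h1 : x ≤ 1) (h2 : y ≤ x) (h3 : d - x - y ≤ y) (h4 : -d - 1 ≤ d - x - y) :
    ∃ A : Matrix (Fin 5) (Fin 5) ℝ, A.IsSymm ∧ (∀ i j, 0 ≤ A i j) ∧
      A.charpoly =
        (X - C 1) * (X - C x) * (X - C y) * (X - C (d - x - y)) * (X + C (d + 1)) := by
  have hd_upper : d ≤ -1 / 2 := hd.2
  have general := stmt_1_general (ρ := 1) (a := d + 1) (b := -(d - x - y)) (c := -y)
    (by linarith) (by linarith) (by linarith) (by linarith) (by linarith)
  rw [show d + 1 + -(d - x - y) + -y - 1 = x by ring] at general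
  simpa only [map_neg, ← sub_eq_add_neg] using general
end

section
/- Let d ∈ [−1/2, −3/4 + (√5)/4] and let x, y be real numbers with 1 ≥ x ≥ y ≥ d−x−y ≥ −d−1. Then the quintuple (1, x, y, d−x−y, −d−1) is symmetrically realizable if and only if x ≤ d + 1. -/
open Polynomial Matrix

/-!
Every quintuple in question has sum zero, so a realizing matrix has zero diagonal.

*Necessity.* If all entries of a nonnegative `A` with zero diagonal are smaller than an eigenvalue
`m > 0`, then at a maximal coordinate of an eigenvector `v` one reads off that `v` has at least
three positive coordinates, or none. The same holds for `-v`, so with at most five coordinates `v`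
has constant sign. Two such eigenvectors overlap, hence are not orthogonal. So some entry of `A`
is at least `min 1 x`, whereas positive semidefiniteness of `A + (d + 1)` bounds every entry by
`d + 1 < 1`.

*Sufficiency.* A matrix invariant under the permutation `(1 2)(3 4)` splits into a `2 × 2` block,
which is given the eigenvalues `w` and `-d - 1` for some `w ∈ {x, y}`, and a `3 × 3` block, which is
given the remaining three. The bound on `d` is the larger root of `4 * d ^ 2 + 6 * d + 1` and only
matters when `y ≥ 0`.
-/

/-- A multiset `s` of real numbers is symmetrically realizable if it is the spectrum, with
multiplicities, of an entrywise nonnegative real symmetric matrix. The index type `n` of the matrix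
is kept explicit; its cardinality is necessarily that of `s`. -/
def IsSymmRealizable (n : Type*) [Fintype n] [DecidableEq n] (s : Multiset ℝ) : Prop :=
  ∃ A : Matrix n n ℝ, A.IsSymm ∧ (∀ i j, 0 ≤ A i j) ∧
    A.charpoly = (s.map fun μ => X - C μ).prod

section Necessity

variable {n : Type*} [Fintype n]

/-- The set of coordinates at which a real vector is positive; its size decides whether
an eigenvector can change sign. -/
noncomputable def posSupport (v : n → ℝ) : Finset n := {i | 0 < v i}

lemma mem_posSupport {v : n → ℝ} {i : n} : i ∈ posSupport v ↔ 0 < v i := by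
  simp [posSupport]

lemma disjoint_posSupport_neg (v : n → ℝ) : Disjoint (posSupport v) (posSupport (-v)) := by
  refine Finset.disjoint_left.mpr fun i hi hi' => ?_
  rw [mem_posSupport] at hi hi'
  exact lt_asymm hi (neg_pos.mp hi')

lemma nonneg_of_posSupport_neg_eq_empty {v : n → ℝ} (h : posSupport (-v) = ∅) : 0 ≤ v := by
  intro i
  by_contra! hi
  exact Finset.notMem_empty i (h ▸ mem_posSupport.mpr (neg_pos.mpr hi))

lemma mulVec_apply_le_sum_posSupport {A : Matrix n n ℝ} (hA : ∀ i j, 0 ≤ A i j) (v : n → ℝ)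
    (i : n) : (A *ᵥ v) i ≤ ∑ j ∈ posSupport v, A i j * v j := by
  rw [mulVec, dotProduct, posSupport, Finset.sum_filter]
  refine Finset.sum_le_sum fun j _ => ?_
  split_ifs with hj
  · exact le_rfl
  · exact mul_nonpos_of_nonneg_of_nonpos (hA i j) (not_lt.mp hj)

lemma dotProduct_pos_of_card_lt_card_add_card {u v : n → ℝ} (hu : 0 ≤ u) (hv : 0 ≤ v)
    (hcard : Fintype.card n < (posSupport u).card + (posSupport v).card) : 0 < u ⬝ᵥ v := by
  classical
  obtain ⟨i, hi⟩ := Finset.inter_nonempty_of_card_lt_card_add_card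
    (Finset.subset_univ _) (Finset.subset_univ _) hcard
  rw [Finset.mem_inter, mem_posSupport, mem_posSupport] at hi
  exact Finset.sum_pos' (fun j _ => mul_nonneg (hu j) (hv j))
    ⟨i, Finset.mem_univ i, mul_pos hi.1 hi.2⟩

lemma exists_le_sum_posSupport_erase [DecidableEq n] {A : Matrix n n ℝ} (hA : ∀ i j, 0 ≤ A i j)
    (hdiag : ∀ i, A i i = 0) {v : n → ℝ} {m : ℝ} (hv : m • v ≤ A *ᵥ v)
    (hpos : (posSupport v).Nonempty) :
    ∃ i ∈ posSupport v, m ≤ ∑ j ∈ (posSupport v).erase i, A i j := by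
  obtain ⟨i, hi, hmax⟩ := (posSupport v).exists_max_image v hpos
  refine ⟨i, hi, le_of_mul_le_mul_right ?_ (mem_posSupport.mp hi)⟩
  calc m * v i ≤ (A *ᵥ v) i := hv i
    _ ≤ ∑ j ∈ posSupport v, A i j * v j := mulVec_apply_le_sum_posSupport hA v i
    _ = ∑ j ∈ (posSupport v).erase i, A i j * v j :=
      (Finset.sum_erase _ (by rw [hdiag, zero_mul])).symm
    _ ≤ ∑ j ∈ (posSupport v).erase i, A i j * v i := Finset.sum_le_sum fun j hj =>
      mul_le_mul_of_nonneg_left (hmax j (Finset.mem_of_mem_erase hj)) (hA i j)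
    _ = (∑ j ∈ (posSupport v).erase i, A i j) * v i := (Finset.sum_mul ..).symm

lemma three_le_card_posSupport {A : Matrix n n ℝ} (hA : ∀ i j, 0 ≤ A i j)
    (hdiag : ∀ i, A i i = 0) {v : n → ℝ} {m : ℝ} (hlt : ∀ i j, A i j < m)
    (hv : m • v ≤ A *ᵥ v) (hpos : (posSupport v).Nonempty) : 3 ≤ (posSupport v).card := by
  classical
  obtain ⟨i, hi, hle⟩ := exists_le_sum_posSupport_erase hA hdiag hv hpos
  by_contra! hcard
  have herase : ((posSupport v).erase i).card ≤ 1 := by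
    rw [Finset.card_erase_of_mem hi]
    omega
  have : Nonempty n := ⟨i⟩
  obtain ⟨j, hj⟩ := Finset.card_le_one_iff_subset_singleton.mp herase
  have hsum : ∑ j ∈ (posSupport v).erase i, A i j ≤ ∑ j ∈ {j}, A i j :=
    Finset.sum_le_sum_of_subset_of_nonneg hj fun k _ _ => hA i k
  rw [Finset.sum_singleton] at hsum
  exact (hlt i j).not_ge (hle.trans hsum)

lemma exists_nonneg_eq_or_eq_neg (hcard : Fintype.card n ≤ 5) {A : Matrix n n ℝ}
    (hA : ∀ i j, 0 ≤ A i j) (hdiag : ∀ i, A i i = 0) {v : n → ℝ} {m : ℝ}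
    (hlt : ∀ i j, A i j < m) (hv : A *ᵥ v = m • v) (hv0 : v ≠ 0) :
    ∃ u, (u = v ∨ u = -v) ∧ 0 ≤ u ∧ 3 ≤ (posSupport u).card := by
  classical
  have hneg : A *ᵥ (-v) = m • (-v) := by rw [mulVec_neg, hv, smul_neg]
  have hunion : (posSupport v).card + (posSupport (-v)).card ≤ 5 := by
    rw [← Finset.card_union_of_disjoint (disjoint_posSupport_neg v)]
    exact (Finset.card_le_univ _).trans hcard
  rcases (posSupport v).eq_empty_or_nonempty with hempty | hpos
  · have hnonneg : 0 ≤ -v := nonneg_of_posSupport_neg_eq_empty (by rwa [neg_neg])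
    have hpos' : (posSupport (-v)).Nonempty := by
      by_contra! hempty'
      exact hv0 (le_antisymm (neg_nonneg.mp hnonneg) (nonneg_of_posSupport_neg_eq_empty hempty'))
    exact ⟨-v, .inr rfl, hnonneg, three_le_card_posSupport hA hdiag hlt hneg.ge hpos'⟩
  · have hthree := three_le_card_posSupport hA hdiag hlt hv.ge hpos
    refine ⟨v, .inl rfl, nonneg_of_posSupport_neg_eq_empty ?_, hthree⟩
    by_contra! hpos'
    have hthree' := three_le_card_posSupport hA hdiag hlt hneg.ge hpos'
    omega

lemma dotProduct_eigenvector_ne_zero (hcard : Fintype.card n ≤ 5) {A : Matrix n n ℝ}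
    (hA : ∀ i j, 0 ≤ A i j) (hdiag : ∀ i, A i i = 0) {v w : n → ℝ} {l m : ℝ}
    (hl : ∀ i j, A i j < l) (hm : ∀ i j, A i j < m) (hv : A *ᵥ v = l • v) (hw : A *ᵥ w = m • w)
    (hv0 : v ≠ 0) (hw0 : w ≠ 0) : v ⬝ᵥ w ≠ 0 := by
  obtain ⟨v', hv', hv'_nonneg, hv'_card⟩ := exists_nonneg_eq_or_eq_neg hcard hA hdiag hl hv hv0
  obtain ⟨w', hw', hw'_nonneg, hw'_card⟩ := exists_nonneg_eq_or_eq_neg hcard hA hdiag hm hw hw0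
  have hpos : 0 < v' ⬝ᵥ w' :=
    dotProduct_pos_of_card_lt_card_add_card hv'_nonneg hw'_nonneg (by omega)
  intro hzero
  rcases hv' with rfl | rfl <;> rcases hw' with rfl | rfl <;> simp [hzero] at hpos

variable [DecidableEq n]

lemma two_mul_apply_le_of_le_eigenvalues {A : Matrix n n ℝ} (hA : A.IsHermitian) {ρ : ℝ}
    (hρ : ∀ i, -ρ ≤ hA.eigenvalues i) {k l : n} (hkl : k ≠ l) :
    2 * A k l ≤ A k k + A l l + 2 * ρ := by
  have hherm : (A - algebraMap ℝ _ (-ρ)).IsHermitian :=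
    hA.sub (by simp [algebraMap_eq_diagonal])
  have hpsd : (A - algebraMap ℝ _ (-ρ)).PosSemidef := by
    refine posSemidef_iff_isHermitian_and_spectrum_nonneg.mpr ⟨hherm, fun μ hμ => ?_⟩
    rw [← spectrum.sub_singleton_eq, hA.spectrum_real_eq_range_eigenvalues] at hμ
    obtain ⟨_, ⟨i, rfl⟩, _, rfl, rfl⟩ := hμ
    exact sub_nonneg.mpr (hρ i)
  set e : n → ℝ := Pi.single k 1 - Pi.single l 1
  have hform : star e ⬝ᵥ (A - algebraMap ℝ _ (-ρ)) *ᵥ e = A k k + A l l + 2 * ρ - 2 * A k l := by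
    have hsymm : A l k = A k l := (isHermitian_iff_isSymm.mp hA).apply k l
    simp [e, mulVec_sub, sub_dotProduct, dotProduct_sub, hkl, hkl.symm, algebraMap_eq_diagonal,
      hsymm]
    ring
  exact sub_nonneg.mp (hform ▸ hpsd.dotProduct_mulVec_nonneg e)

lemma min_eigenvalues_le (hcard : Fintype.card n ≤ 5) {A : Matrix n n ℝ} (hA : A.IsHermitian)
    (hnonneg : ∀ i j, 0 ≤ A i j) (hdiag : ∀ i, A i i = 0) {ρ : ℝ}
    (hρ : ∀ i, -ρ ≤ hA.eigenvalues i) {i j : n} (hij : i ≠ j) :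
    min (hA.eigenvalues i) (hA.eigenvalues j) ≤ ρ := by
  have hoff : ∀ k l, k ≠ l → A k l ≤ ρ := fun k l hkl => by
    have h := two_mul_apply_le_of_le_eigenvalues hA hρ hkl
    rw [hdiag, hdiag] at h
    linarith
  have hentry : ∀ k l, A k l ≤ ρ := fun k l => by
    rcases eq_or_ne k l with rfl | hkl
    · exact hdiag k ▸ (hnonneg i j).trans (hoff i j hij)
    · exact hoff k l hkl
  by_contra! hlt
  obtain ⟨hi, hj⟩ := lt_min_iff.mp hlt
  have hne : ∀ k, WithLp.ofLp (hA.eigenvectorBasis k) ≠ 0 := fun k h =>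
    hA.eigenvectorBasis.orthonormal.ne_zero k (WithLp.ofLp_injective 2 h)
  refine dotProduct_eigenvector_ne_zero hcard hnonneg hdiag (fun k l => (hentry k l).trans_lt hi)
    (fun k l => (hentry k l).trans_lt hj) (hA.mulVec_eigenvectorBasis i)
    (hA.mulVec_eigenvectorBasis j) (hne i) (hne j) ?_
  simpa [EuclideanSpace.inner_eq_star_dotProduct] using
    hA.eigenvectorBasis.orthonormal.inner_eq_zero hij.symm

lemma map_eigenvalues_eq_of_charpoly_eq {A : Matrix n n ℝ} (hA : A.IsHermitian) {s : Multiset ℝ}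
    (hs : A.charpoly = (s.map fun μ => X - C μ).prod) :
    Finset.univ.val.map hA.eigenvalues = s := by
  have hroots := hA.roots_charpoly_eq_eigenvalues
  rw [hs, roots_multiset_prod_X_sub_C] at hroots
  exact hroots.symm

lemma diag_eq_zero_of_sum_eigenvalues_eq_zero {A : Matrix n n ℝ} (hA : A.IsHermitian)
    (hnonneg : ∀ i, 0 ≤ A i i) (hsum : ∑ i, hA.eigenvalues i = 0) (i : n) : A i i = 0 := by
  have htrace : A.trace = 0 := by simpa [hsum] using hA.trace_eq_sum_eigenvalues
  exact (Finset.sum_eq_zero_iff_of_nonneg fun k _ => hnonneg k).mp htrace i (Finset.mem_univ i)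

lemma IsSymmRealizable.min_le (hcard : Fintype.card n ≤ 5) {l m ρ : ℝ} {t : Multiset ℝ}
    (h : IsSymmRealizable n (l ::ₘ m ::ₘ t)) (hsum : (l ::ₘ m ::ₘ t).sum = 0)
    (hρ : ∀ μ ∈ l ::ₘ m ::ₘ t, -ρ ≤ μ) : min l m ≤ ρ := by
  obtain ⟨A, hsymm, hnonneg, hchar⟩ := h
  have hA : A.IsHermitian := isHermitian_iff_isSymm.mpr hsymm
  have hspec := map_eigenvalues_eq_of_charpoly_eq hA hchar
  have hdiag := diag_eq_zero_of_sum_eigenvalues_eq_zero hA (fun i => hnonneg i i)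
    ((congrArg Multiset.sum hspec).trans hsum)
  have hbound : ∀ i, -ρ ≤ hA.eigenvalues i := fun i =>
    hρ _ (hspec ▸ Multiset.mem_map_of_mem _ (Finset.mem_univ_val i))
  obtain ⟨i, -, rfl, herase⟩ := (Multiset.map_eq_cons ..).mpr hspec
  obtain ⟨j, hj, rfl, -⟩ := (Multiset.map_eq_cons ..).mpr herase
  have hij : i ≠ j := fun hij =>
    (Multiset.Nodup.notMem_erase Finset.univ.nodup) (hij ▸ hj)
  exact min_eigenvalues_le hcard hA hnonneg hdiag hbound hij

end Necessity

section Sufficiency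

/-- The general symmetric matrix with zero diagonal that is invariant under the permutation
`(1 2)(3 4)` of its indices `0, …, 4`. -/
def reflectionMatrix {R : Type*} [Zero R] (a b c e f g : R) : Matrix (Fin 5) (Fin 5) R :=
  !![0, a, a, b, b;
     a, 0, c, f, g;
     a, c, 0, g, f;
     b, f, g, 0, e;
     b, g, f, e, 0]

lemma isSymm_reflectionMatrix {R : Type*} [Zero R] (a b c e f g : R) :
    (reflectionMatrix a b c e f g).IsSymm := by
  ext i j
  fin_cases i <;> fin_cases j <;> rfl

lemma reflectionMatrix_apply_nonneg {R : Type*} [Zero R] [Preorder R] {a b c e f g : R}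
    (ha : 0 ≤ a) (hb : 0 ≤ b) (hc : 0 ≤ c) (he : 0 ≤ e) (hf : 0 ≤ f) (hg : 0 ≤ g) (i j : Fin 5) :
    0 ≤ reflectionMatrix a b c e f g i j := by
  fin_cases i <;> fin_cases j <;> first | exact le_rfl | assumption

-- The factors are the actions on the antisymmetric and on the symmetric vectors.
lemma charpoly_reflectionMatrix {R : Type*} [CommRing R] (a b c e f g : R) :
    (reflectionMatrix a b c e f g).charpoly =
      !![-c, f - g; f - g, -e].charpoly *
        !![0, 2 * a, 2 * b; a, c, f + g; b, f + g, e].charpoly := by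
  simp [reflectionMatrix, charpoly, charmatrix_apply, two_mul, det_succ_row_zero,
    Fin.sum_univ_succ, Fin.succAbove, submatrix]
  ring

lemma isSymmRealizable_of_reflection {a b c e s δ l p q v w : ℝ} (ha : 0 ≤ a) (hb : 0 ≤ b)
    (hc : 0 ≤ c) (he : 0 ≤ e) (hδ : |δ| ≤ s)
    (hsum : l + p + q = c + e) (hsum' : v + w = -(c + e)) (hprod' : v * w = c * e - δ ^ 2)
    (hpair : l * p + l * q + p * q = c * e - s ^ 2 - a ^ 2 - b ^ 2)
    (hprod : l * p * q = 2 * a * b * s - a ^ 2 * e - b ^ 2 * c) :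
    IsSymmRealizable (Fin 5) {l, w, p, q, v} := by
  obtain ⟨r, hr, hr2⟩ : ∃ r : ℝ, 0 ≤ r ∧ r ^ 2 = 1 / 2 :=
    ⟨√(1 / 2), Real.sqrt_nonneg _, Real.sq_sqrt one_half_pos.le⟩
  obtain ⟨hδ₁, hδ₂⟩ := abs_le.mp hδ
  refine ⟨reflectionMatrix (r * a) (r * b) c e ((s + δ) / 2) ((s - δ) / 2),
    isSymm_reflectionMatrix .., reflectionMatrix_apply_nonneg (mul_nonneg hr ha)
      (mul_nonneg hr hb) hc he (by linarith) (by linarith), ?_⟩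
  have hanti : !![-c, δ; δ, -e].charpoly = (X - C v) * (X - C w) := by
    refine Polynomial.funext fun t => ?_
    simp [eval_charpoly, det_fin_two]
    linear_combination t * hsum' - hprod'
  have hsymm : !![0, 2 * (r * a), 2 * (r * b); r * a, c, s; r * b, s, e].charpoly =
      (X - C l) * (X - C p) * (X - C q) := by
    refine Polynomial.funext fun t => ?_
    simp [eval_charpoly, det_fin_three]
    linear_combination t ^ 2 * hsum - t * hpair + hprod -
      2 * (2 * a * b * s - a ^ 2 * e - b ^ 2 * c + t * (a ^ 2 + b ^ 2)) * hr2
  have hadd : (s + δ) / 2 + (s - δ) / 2 = s := by ring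
  have hsub : (s + δ) / 2 - (s - δ) / 2 = δ := by ring
  rw [charpoly_reflectionMatrix, hadd, hsub, hanti, hsymm]
  simp
  ring

lemma isSymmRealizable_of_nonpos {x y z : ℝ} (hx : x ≤ 0) (hy : y ≤ 0) (hz : z ≤ 0)
    (hmin : -(x + y + z) - 1 ≤ z) :
    IsSymmRealizable (Fin 5) {1, x, y, z, -(x + y + z) - 1} := by
  have hu : 0 ≤ -x - y := by linarith
  have hv : 0 ≤ 1 + x + z := by linarith
  have hgap : 0 < 1 + z - y := by
    by_contra!
    linarith
  -- The block `!![c, s; s, e]` is `y` plus the rank-one matrix of `(u, v)`, with eigenvalues `y`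
  -- and `1 + z`; bordering it by `k • (u, v)` keeps `y` and replaces `1 + z` by `1` and `z`.
  set u := √(-x - y)
  set v := √(1 + x + z)
  set k := √(-z / (1 + z - y))
  have hu2 : u ^ 2 = -x - y := Real.sq_sqrt hu
  have hv2 : v ^ 2 = 1 + x + z := Real.sq_sqrt hv
  have hk2 : k ^ 2 * (1 + z - y) = -z := by
    rw [Real.sq_sqrt (div_nonneg (neg_nonneg.mpr hz) hgap.le), div_mul_cancel₀ _ hgap.ne']
  apply isSymmRealizable_of_reflection (a := k * u) (b := k * v) (c := -x) (e := x + y + z + 1)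
    (s := u * v) (δ := 0)
  · positivity
  · positivity
  · linarith
  · linarith
  · rw [abs_zero]
    positivity
  · ring
  · ring
  · ring
  · linear_combination u ^ 2 * hv2 + (1 + x + z) * hu2 + k ^ 2 * (hu2 + hv2) + hk2
  · linear_combination k ^ 2 * (x + y + z + 1 - 2 * v ^ 2) * hu2 + k ^ 2 * (x + 2 * y) * hv2 +
      y * hk2

-- The case `b = 0` of `isSymmRealizable_of_reflection`; the last hypothesis amounts to `δ ≤ s`.
lemma isSymmRealizable_of_tridiagonal {d x y z c e : ℝ} (hsum : x + y + z = d) (hc : 0 ≤ c)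
    (he : 0 < e) (hce : c + e = d + 1 - y) (hδ : 0 ≤ c * e + (d + 1) * y) (hxz : x * z ≤ 0)
    (hle : -(x * z) ≤ e * (-d * (1 + y) - x * z)) :
    IsSymmRealizable (Fin 5) {1, x, y, z, -d - 1} := by
  have ha : 0 ≤ -(x * z) / e := div_nonneg (neg_nonneg.mpr hxz) he.le
  have hs : c * e + (d + 1) * y ≤ c * e + y - d - x * z - -(x * z) / e := by
    have := (div_le_iff₀' he).mpr hle
    linarith
  suffices IsSymmRealizable (Fin 5) {1, y, x, z, -d - 1} by
    rwa [Multiset.insert_eq_cons, Multiset.insert_eq_cons x, Multiset.insert_eq_cons y,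
      Multiset.cons_swap x y]
  have ha2 : √(-(x * z) / e) ^ 2 = -(x * z) / e := Real.sq_sqrt ha
  apply isSymmRealizable_of_reflection (a := √(-(x * z) / e)) (b := 0) (c := c) (e := e)
    (s := √(c * e + y - d - x * z - -(x * z) / e)) (δ := √(c * e + (d + 1) * y))
  · positivity
  · exact le_rfl
  · exact hc
  · exact he.le
  · rw [abs_of_nonneg (Real.sqrt_nonneg _)]
    exact Real.sqrt_le_sqrt hs
  · linarith
  · linarith
  · rw [Real.sq_sqrt hδ]
    ring
  · rw [Real.sq_sqrt (hδ.trans hs), ha2]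
    linear_combination hsum
  · rw [ha2]
    field_simp
    ring

lemma isSymmRealizable_of_nonneg_of_nonpos {d x y z : ℝ} (hsum : x + y + z = d) (hd : d ≤ 0)
    (hd' : 0 < d + 1) (hx : 0 ≤ x) (hy : y ≤ 0) (hz : z ≤ 0) (hxd : x ≤ d + 1) :
    IsSymmRealizable (Fin 5) {1, x, y, z, -d - 1} := by
  refine isSymmRealizable_of_tridiagonal hsum (neg_nonneg.mpr hy) hd' (by ring) (by linarith)
    (mul_nonpos_of_nonneg_of_nonpos hx hz) ?_
  have hfactor : (d + 1) * (-d * (1 + y) - x * z) + x * z = -d * (d + 1 - x) * (1 + x + y) := by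
    rw [← hsum]
    ring
  have hnonneg : 0 ≤ -d * (d + 1 - x) * (1 + x + y) :=
    mul_nonneg (mul_nonneg (by linarith) (by linarith)) (by linarith)
  linarith

-- Completing the square in `y`, the difference of the two sides is at least
-- `-(4 * d ^ 2 + 6 * d + 1) / 4`; this is where the bound on `d` comes from.
lemma mul_mul_sub_le_of_quadratic_nonpos {d : ℝ} (hd : 4 * d ^ 2 + 6 * d + 1 ≤ 0)
    (hd' : 0 ≤ 2 * d + 1) (y : ℝ) :
    (2 * d + 1 - y) * (d + 1) * (y - d) ≤ (d + 1 - y) * (-d * (1 + y)) := by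
  have hsq : 0 ≤ (2 * d + 1) * (y - (2 * d + 1) / 2) ^ 2 := mul_nonneg hd' (sq_nonneg _)
  linear_combination hsq + hd / 4

lemma isSymmRealizable_of_nonneg {d x y z : ℝ} (hsum : x + y + z = d)
    (hd : 4 * d ^ 2 + 6 * d + 1 ≤ 0) (hx : 0 ≤ x) (hy : 0 ≤ y) (hz : -d - 1 ≤ z) :
    IsSymmRealizable (Fin 5) {1, x, y, z, -d - 1} := by
  have hd0 : d < 0 := by linarith [sq_nonneg d]
  refine isSymmRealizable_of_tridiagonal hsum le_rfl (e := d + 1 - y) (by linarith) (by ring)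
    ?_ (mul_nonpos_of_nonneg_of_nonpos hx (by linarith)) ?_
  · rw [zero_mul, zero_add]
    exact mul_nonneg (by linarith) hy
  have hxz : x * -z ≤ (2 * d + 1 - y) * (d + 1) :=
    mul_le_mul (by linarith) (by linarith) (by linarith) (by linarith)
  have hbound : x * -z * (y - d) ≤ (d + 1 - y) * (-d * (1 + y)) :=
    (mul_le_mul_of_nonneg_right hxz (by linarith)).trans
      (mul_mul_sub_le_of_quadratic_nonpos hd (by linarith) y)
  linear_combination hbound

lemma isSymmRealizable_of_le {d x y z : ℝ} (hsum : x + y + z = d)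
    (hd : 4 * d ^ 2 + 6 * d + 1 ≤ 0) (hyx : y ≤ x) (hzy : z ≤ y) (hz : -d - 1 ≤ z)
    (hx : x ≤ d + 1) : IsSymmRealizable (Fin 5) {1, x, y, z, -d - 1} := by
  have hd0 : d < 0 := by linarith [sq_nonneg d]
  have hz0 : z ≤ 0 := by linarith
  rcases le_total x 0 with hx0 | hx0
  · subst hsum
    exact isSymmRealizable_of_nonpos hx0 (hyx.trans hx0) hz0 hz
  rcases le_total y 0 with hy0 | hy0
  · exact isSymmRealizable_of_nonneg_of_nonpos hsum hd0.le (by linarith) hx0 hy0 hz0 hx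
  · exact isSymmRealizable_of_nonneg hsum hd hx0 hy0 hz

end Sufficiency

theorem stmt_2_general (d x y : ℝ) (hd : d ≤ -3 / 4 + √5 / 4)
    (hyx : y ≤ x) (hzy : d - x - y ≤ y) (hmin : -d - 1 ≤ d - x - y) :
    (∃ A : Matrix (Fin 5) (Fin 5) ℝ, A.IsSymm ∧ (∀ i j, 0 ≤ A i j) ∧
        A.charpoly =
          (X - C 1) * (X - C x) * (X - C y) * (X - C (d - x - y)) * (X + C (d + 1))) ↔
      x ≤ d + 1 := by
  have hpoly : (X - C 1) * (X - C x) * (X - C y) * (X - C (d - x - y)) * (X + C (d + 1)) =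
      (({1, x, y, d - x - y, -d - 1} : Multiset ℝ).map fun μ => X - C μ).prod := by
    simp
    ring
  rw [hpoly]
  change IsSymmRealizable (Fin 5) {1, x, y, d - x - y, -d - 1} ↔ _
  have hsq : (4 * d + 3) ^ 2 ≤ 5 := (Real.le_sqrt (by linarith) (by norm_num)).mp (by linarith)
  have hquad : 4 * d ^ 2 + 6 * d + 1 ≤ 0 := by linarith
  have hd0 : d < 0 := by linarith [sq_nonneg d]
  refine ⟨fun h => ?_, isSymmRealizable_of_le (by ring) hquad hyx hzy hmin⟩
  have hsum : ({1, x, y, d - x - y, -d - 1} : Multiset ℝ).sum = 0 := by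
    simp
    ring
  have hle : min 1 x ≤ d + 1 := by
    refine h.min_le (Fintype.card_fin 5).le hsum ?_
    simp only [Multiset.insert_eq_cons, Multiset.mem_cons, Multiset.mem_singleton,
      forall_eq_or_imp, forall_eq]
    refine ⟨?_, ?_, ?_, ?_, ?_⟩ <;> linarith
  exact (min_le_iff.mp hle).resolve_left (by linarith)

theorem stmt_2 (d x y : ℝ) (hd : d ∈ Set.Icc (-1/2 : ℝ) (-3/4 + Real.sqrt 5 / 4))
    (h1 : x ≤ 1) (h2 : y ≤ x) (h3 : d - x - y ≤ y) (h4 : -d - 1 ≤ d - x - y) :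
    (∃ A : Matrix (Fin 5) (Fin 5) ℝ, A.IsSymm ∧ (∀ i j, 0 ≤ A i j) ∧
        A.charpoly =
          (X - C 1) * (X - C x) * (X - C y) * (X - C (d - x - y)) * (X + C (d + 1))) ↔
      x ≤ d + 1 :=
  stmt_2_general d x y hd.2 h2 h3 h4
end

section
/- Let A be a 5×5 real symmetric matrix with all entries nonnegative, and let λ₁ ≥ λ₂ ≥ λ₃ ≥ λ₄ ≥ λ₅ be its eigenvalues (counted with multiplicity, in decreasing order). Then λ₂ + λ₅ ≤ trace(A). -/
open Polynomial Matrix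

/-!
The positive and negative parts of an eigenvector of an entrywise nonnegative matrix have Rayleigh
quotients at least as large as the eigenvalue, and two orthogonal vectors of constant sign are
disjointly supported. Hence eigenvectors for `λ₁` and `λ₂` always yield two disjointly supported
vectors with Rayleigh quotients at least `λ₂`, and one of them, say `p`, lives on a set `S` of
`⌊n / 2⌋` indices. The Rayleigh quotient at `p` of the positive semidefinite matrix `A - λₙ I` is at
most the trace of its principal submatrix on `S`, that is,
`λ₂ - λₙ ≤ ∑ i ∈ S, A i i - ⌊n / 2⌋ λₙ ≤ trace A - ⌊n / 2⌋ λₙ`.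
-/

section OrderedVectors

variable {ι κ R : Type*}

theorem posPart_mul_negPart_eq_zero [Ring R] [LinearOrder R] [IsOrderedAddMonoid R]
    (x : ι → R) : x⁺ * x⁻ = 0 := by
  ext i
  rcases le_total (x i) 0 with h | h <;> simp [h]

variable [Fintype ι]

theorem posPart_dotProduct_self [Ring R] [LinearOrder R] (x : ι → R) :
    x⁺ ⬝ᵥ x = x⁺ ⬝ᵥ x⁺ := by
  refine Finset.sum_congr rfl fun i _ ↦ ?_
  rcases le_total (x i) 0 with h | h <;> simp [h]

theorem mulVec_mono_of_nonneg [Semiring R] [PartialOrder R] [IsOrderedRing R]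
    {A : Matrix κ ι R} (hA : ∀ i j, 0 ≤ A i j) {x y : ι → R} (hxy : x ≤ y) :
    A *ᵥ x ≤ A *ᵥ y :=
  fun i ↦ dotProduct_le_dotProduct_of_nonneg_left hxy (hA i)

variable [Ring R] [LinearOrder R] {x y : ι → R}

theorem dotProduct_self_pos_of_ne_zero [IsStrictOrderedRing R] (hx : x ≠ 0) : 0 < x ⬝ᵥ x :=
  (Finset.sum_nonneg fun i _ ↦ mul_self_nonneg (x i)).lt_of_ne'
    (dotProduct_self_eq_zero.not.mpr hx)

variable [IsOrderedRing R]

theorem mul_eq_zero_of_dotProduct_eq_zero_of_nonneg (hx : 0 ≤ x) (hy : 0 ≤ y)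
    (hxy : x ⬝ᵥ y = 0) : x * y = 0 := by
  ext i
  exact (Finset.sum_eq_zero_iff_of_nonneg fun j _ ↦ mul_nonneg (hx j) (hy j)).mp hxy i
    (Finset.mem_univ i)

theorem mul_eq_zero_of_dotProduct_eq_zero_of_constant_sign (hx : 0 ≤ x ∨ x ≤ 0)
    (hy : 0 ≤ y ∨ y ≤ 0) (hxy : x ⬝ᵥ y = 0) : x * y = 0 := by
  wlog hx0 : 0 ≤ x generalizing x
  · simpa using this (x := -x) (by simpa using hx.symm) (by simpa using hxy)
      (by simpa using hx.resolve_left hx0)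
  wlog hy0 : 0 ≤ y generalizing y
  · simpa using this (y := -y) (by simpa using hy.symm) (by simpa using hxy)
      (by simpa using hy.resolve_left hy0)
  exact mul_eq_zero_of_dotProduct_eq_zero_of_nonneg hx0 hy0 hxy

end OrderedVectors

section Rayleigh

variable {ι R : Type*} [Fintype ι] [CommRing R] [LinearOrder R] [IsStrictOrderedRing R]

/-- The Rayleigh quotient of `A` at the nonzero vector `p` is at least `a`, stated without
division so that it is meaningful over any ordered ring; it is how eigenvalue bounds pass to the
positive and negative parts of an eigenvector, which are not eigenvectors themselves. -/
def RayleighGE (A : Matrix ι ι R) (a : R) (p : ι → R) : Prop :=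
  p ≠ 0 ∧ a * (p ⬝ᵥ p) ≤ p ⬝ᵥ A *ᵥ p

variable {A : Matrix ι ι R} {a m m' : R} {x y : ι → R}

theorem rayleighGE_of_mulVec_eq_smul (hx : A *ᵥ x = m • x) (ham : a ≤ m) (hx0 : x ≠ 0) :
    RayleighGE A a x := by
  refine ⟨hx0, ?_⟩
  rw [hx, dotProduct_smul, smul_eq_mul]
  exact mul_le_mul_of_nonneg_right ham (dotProduct_self_pos_of_ne_zero hx0).le

theorem rayleighGE_posPart (hA : ∀ i j, 0 ≤ A i j) (hx : A *ᵥ x = m • x) (ham : a ≤ m)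
    (hx0 : x⁺ ≠ 0) : RayleighGE A a x⁺ := by
  refine ⟨hx0, ?_⟩
  calc a * (x⁺ ⬝ᵥ x⁺) ≤ m * (x⁺ ⬝ᵥ x⁺) :=
        mul_le_mul_of_nonneg_right ham (dotProduct_self_pos_of_ne_zero hx0).le
    _ = x⁺ ⬝ᵥ A *ᵥ x := by rw [hx, dotProduct_smul, posPart_dotProduct_self, smul_eq_mul]
    _ ≤ x⁺ ⬝ᵥ A *ᵥ x⁺ := dotProduct_le_dotProduct_of_nonneg_left
        (mulVec_mono_of_nonneg hA (le_posPart x)) (posPart_nonneg x)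

theorem rayleighGE_negPart (hA : ∀ i j, 0 ≤ A i j) (hx : A *ᵥ x = m • x) (ham : a ≤ m)
    (hx0 : x⁻ ≠ 0) : RayleighGE A a x⁻ := by
  rw [← posPart_neg] at hx0 ⊢
  exact rayleighGE_posPart hA (by rw [mulVec_neg, hx, smul_neg]) ham hx0

theorem exists_rayleighGE_mul_eq_zero_of_orthogonal (hA : ∀ i j, 0 ≤ A i j)
    (hx : A *ᵥ x = m • x) (hy : A *ᵥ y = m' • y) (ham : a ≤ m) (ham' : a ≤ m')
    (hx0 : x ≠ 0) (hy0 : y ≠ 0) (hxy : x ⬝ᵥ y = 0) :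
    ∃ p q, RayleighGE A a p ∧ RayleighGE A a q ∧ p * q = 0 := by
  have constant_sign (z : ι → R) (hz : ¬(z⁺ ≠ 0 ∧ z⁻ ≠ 0)) : 0 ≤ z ∨ z ≤ 0 := by
    rwa [not_and_or, not_not, not_not, posPart_eq_zero, negPart_eq_zero, or_comm] at hz
  by_cases hx_mixed : x⁺ ≠ 0 ∧ x⁻ ≠ 0
  · exact ⟨x⁺, x⁻, rayleighGE_posPart hA hx ham hx_mixed.1,
      rayleighGE_negPart hA hx ham hx_mixed.2, posPart_mul_negPart_eq_zero x⟩
  by_cases hy_mixed : y⁺ ≠ 0 ∧ y⁻ ≠ 0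
  · exact ⟨y⁺, y⁻, rayleighGE_posPart hA hy ham' hy_mixed.1,
      rayleighGE_negPart hA hy ham' hy_mixed.2, posPart_mul_negPart_eq_zero y⟩
  exact ⟨x, y, rayleighGE_of_mulVec_eq_smul hx ham hx0, rayleighGE_of_mulVec_eq_smul hy ham' hy0,
    mul_eq_zero_of_dotProduct_eq_zero_of_constant_sign (constant_sign x hx_mixed)
      (constant_sign y hy_mixed) hxy⟩

end Rayleigh

section Support

variable {ι : Type*} [Fintype ι]

theorem exists_card_eq_half_support_subset {R : Type*} [MulZeroClass R] [NoZeroDivisors R]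
    {p q : ι → R} (hpq : p * q = 0) :
    ∃ S : Finset ι, S.card = Fintype.card ι / 2 ∧
      (Function.support p ⊆ S ∨ Function.support q ⊆ S) := by
  classical
  let P : Finset ι := {i | p i ≠ 0}
  let Q : Finset ι := {i | q i ≠ 0}
  have disjoint : Disjoint P Q := Finset.disjoint_filter.mpr fun i _ hp hq ↦
    mul_ne_zero hp hq (congrFun hpq i)
  have card_add_le : P.card + Q.card ≤ Fintype.card ι := by
    rw [← Finset.card_union_of_disjoint disjoint]
    exact Finset.card_le_univ _
  rcases (by omega : P.card ≤ Fintype.card ι / 2 ∨ Q.card ≤ Fintype.card ι / 2) with h | h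
  · obtain ⟨S, hPS, hS⟩ := Finset.exists_superset_card_eq h (Nat.div_le_self _ 2)
    exact ⟨S, hS, .inl fun i hi ↦ hPS (by simpa [P] using hi)⟩
  · obtain ⟨S, hQS, hS⟩ := Finset.exists_superset_card_eq h (Nat.div_le_self _ 2)
    exact ⟨S, hS, .inr fun i hi ↦ hQS (by simpa [Q] using hi)⟩

theorem dotProduct_eq_sum_of_support_subset {R : Type*} [NonUnitalNonAssocSemiring R]
    {p : ι → R} {S : Finset ι} (hp : Function.support p ⊆ S) (c : ι → R) :
    c ⬝ᵥ p = ∑ i ∈ S, c i * p i := by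
  refine (Finset.sum_subset S.subset_univ fun i _ hi ↦ ?_).symm
  rw [Function.notMem_support.mp fun h ↦ hi (hp h), mul_zero]

end Support

section Trace

variable {ι : Type*} [Fintype ι]

open scoped MatrixOrder in
theorem dotProduct_mulVec_le_sum_diag_mul_of_posSemidef {B : Matrix ι ι ℝ} (hB : B.PosSemidef)
    {p : ι → ℝ} {S : Finset ι} (hp : Function.support p ⊆ S) :
    p ⬝ᵥ B *ᵥ p ≤ (∑ i ∈ S, B i i) * (p ⬝ᵥ p) := by
  classical
  obtain ⟨L, rfl⟩ := CStarAlgebra.nonneg_iff_eq_star_mul_self.mp hB.nonneg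
  have cauchy_schwarz (k : ι) : (L k ⬝ᵥ p) ^ 2 ≤ (∑ i ∈ S, L k i ^ 2) * (p ⬝ᵥ p) := by
    simp only [dotProduct_eq_sum_of_support_subset hp, ← sq]
    exact Finset.sum_mul_sq_le_sq_mul_sq S (L k) p
  calc p ⬝ᵥ (star L * L) *ᵥ p = ∑ k, (L k ⬝ᵥ p) ^ 2 := by
        rw [← mulVec_mulVec, dotProduct_mulVec, star_eq_conjTranspose,
          conjTranspose_eq_transpose_of_trivial, vecMul_transpose]
        simp only [dotProduct, mulVec, sq]
    _ ≤ ∑ k, (∑ i ∈ S, L k i ^ 2) * (p ⬝ᵥ p) := Finset.sum_le_sum fun k _ ↦ cauchy_schwarz k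
    _ = (∑ i ∈ S, (star L * L) i i) * (p ⬝ᵥ p) := by
        rw [← Finset.sum_mul, Finset.sum_comm]
        simp [mul_apply, sq]

variable [DecidableEq ι]

theorem add_mul_le_sum_diag_of_rayleighGE {A : Matrix ι ι ℝ} {a b : ℝ} {p : ι → ℝ} {S : Finset ι}
    (hb : (A - b • 1).PosSemidef) (hpa : RayleighGE A a p) (hp : Function.support p ⊆ S) :
    a + (S.card - 1) * b ≤ ∑ i ∈ S, A i i := by
  obtain ⟨hp0, ha⟩ := hpa
  have shifted : p ⬝ᵥ A *ᵥ p - b * (p ⬝ᵥ p) ≤ (∑ i ∈ S, A i i - S.card * b) * (p ⬝ᵥ p) := by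
    simpa [sub_mulVec, smul_mulVec] using dotProduct_mulVec_le_sum_diag_mul_of_posSemidef hb hp
  have cancel : (a - b) * (p ⬝ᵥ p) ≤ (∑ i ∈ S, A i i - S.card * b) * (p ⬝ᵥ p) := by linarith
  linarith [le_of_mul_le_mul_right cancel (dotProduct_self_pos_of_ne_zero hp0)]

theorem add_half_mul_le_trace_of_orthogonal {A : Matrix ι ι ℝ} (hnn : ∀ i j, 0 ≤ A i j)
    {a b m m' : ℝ} {x y : ι → ℝ} (hb : (A - b • 1).PosSemidef)
    (hx : A *ᵥ x = m • x) (hy : A *ᵥ y = m' • y) (ham : a ≤ m) (ham' : a ≤ m')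
    (hx0 : x ≠ 0) (hy0 : y ≠ 0) (hxy : x ⬝ᵥ y = 0) :
    a + ((Fintype.card ι / 2 : ℕ) - 1) * b ≤ A.trace := by
  obtain ⟨p, q, hp, hq, hpq⟩ :=
    exists_rayleighGE_mul_eq_zero_of_orthogonal hnn hx hy ham ham' hx0 hy0 hxy
  obtain ⟨S, hS, hsupp⟩ := exists_card_eq_half_support_subset hpq
  calc a + ((Fintype.card ι / 2 : ℕ) - 1) * b = a + (S.card - 1) * b := by rw [hS]
    _ ≤ ∑ i ∈ S, A i i := hsupp.elim (add_mul_le_sum_diag_of_rayleighGE hb hp)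
        (add_mul_le_sum_diag_of_rayleighGE hb hq)
    _ ≤ A.trace := Finset.sum_le_univ_sum_of_nonneg fun i ↦ hnn i i

end Trace

section Spectrum

variable {ι : Type*} [Fintype ι] [DecidableEq ι]

open scoped ComplexOrder MatrixOrder in
theorem posSemidef_sub_smul_one_of_le_eigenvalues {𝕜 : Type*} [RCLike 𝕜] {A : Matrix ι ι 𝕜}
    (hA : A.IsHermitian) {b : ℝ} (hb : ∀ i, b ≤ hA.eigenvalues i) : (A - b • 1).PosSemidef := by
  rw [← Algebra.algebraMap_eq_smul_one, ← Matrix.le_iff,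
    algebraMap_le_iff_le_spectrum hA.isSelfAdjoint, hA.spectrum_real_eq_range_eigenvalues]
  exact Set.forall_mem_range.mpr hb

theorem add_half_mul_le_trace_of_le_eigenvalues {A : Matrix ι ι ℝ} (hA : A.IsHermitian)
    (hnn : ∀ i j, 0 ≤ A i j) {a b : ℝ} {i j : ι} (hij : i ≠ j) (hi : a ≤ hA.eigenvalues i)
    (hj : a ≤ hA.eigenvalues j) (hb : ∀ k, b ≤ hA.eigenvalues k) :
    a + ((Fintype.card ι / 2 : ℕ) - 1) * b ≤ A.trace := by
  have eigenvector_ne_zero (k : ι) : (hA.eigenvectorBasis k).ofLp ≠ 0 := by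
    simpa using hA.eigenvectorBasis.orthonormal.ne_zero k
  have orthogonal : (hA.eigenvectorBasis i).ofLp ⬝ᵥ (hA.eigenvectorBasis j).ofLp = 0 := by
    simpa [EuclideanSpace.inner_eq_star_dotProduct] using
      hA.eigenvectorBasis.orthonormal.2 hij.symm
  exact add_half_mul_le_trace_of_orthogonal hnn (posSemidef_sub_smul_one_of_le_eigenvalues hA hb)
    (hA.mulVec_eigenvectorBasis i) (hA.mulVec_eigenvectorBasis j) hi hj
    (eigenvector_ne_zero i) (eigenvector_ne_zero j) orthogonal

theorem exists_equiv_of_map_univ_eq {α β γ : Type*} [Fintype α] [Fintype β] {f : α → γ}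
    {g : β → γ} (h : Finset.univ.val.map f = Finset.univ.val.map g) :
    ∃ e : α ≃ β, ∀ a, g (e a) = f a := by
  classical
  have fiber_equiv (c : γ) : Nonempty (f ⁻¹' {c} ≃ g ⁻¹' {c}) := by
    rw [← Fintype.card_eq]
    have count_eq := congrArg (Multiset.count c) h
    simp only [Multiset.count_map, ← Finset.filter_val, ← Finset.card_def] at count_eq
    simpa [Fintype.card_subtype, eq_comm] using count_eq
  exact ⟨.ofPreimageEquiv fun c ↦ (fiber_equiv c).some, Equiv.ofPreimageEquiv_map _⟩

theorem exists_perm_eigenvalues_eq_of_charpoly_eq_prod {A : Matrix ι ι ℝ} (hA : A.IsHermitian)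
    {l : ι → ℝ} (hl : A.charpoly = ∏ i, (X - C (l i))) :
    ∃ σ : Equiv.Perm ι, ∀ i, hA.eigenvalues (σ i) = l i := by
  apply exists_equiv_of_map_univ_eq
  have roots_eq : A.charpoly.roots = Finset.univ.val.map l := by
    simpa [hl, Multiset.map_map] using roots_multiset_prod_X_sub_C (Finset.univ.val.map l)
  exact roots_eq.symm.trans hA.roots_charpoly_eq_eigenvalues

end Spectrum

theorem stmt_4_general {n : ℕ} (A : Matrix (Fin (n + 2)) (Fin (n + 2)) ℝ) (hsym : A.IsSymm)
    (hnn : ∀ i j, 0 ≤ A i j) (l : Fin (n + 2) → ℝ) (hord : Antitone l)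
    (hchar : A.charpoly = ∏ i, (X - C (l i))) :
    l 1 + (n / 2 : ℕ) * l (Fin.last (n + 1)) ≤ A.trace := by
  have hA : A.IsHermitian := (conjTranspose_eq_transpose_of_trivial A).trans hsym
  obtain ⟨σ, hσ⟩ := exists_perm_eigenvalues_eq_of_charpoly_eq_prod hA hchar
  have smallest (k : Fin (n + 2)) : l (Fin.last (n + 1)) ≤ hA.eigenvalues k := by
    simpa [← hσ] using hord (Fin.le_last (σ.symm k))
  have bound := add_half_mul_le_trace_of_le_eigenvalues hA hnn (σ.injective.ne Fin.zero_ne_one)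
    ((hord (Fin.zero_le 1)).trans_eq (hσ 0).symm) (hσ 1).ge smallest
  simpa using bound

theorem stmt_4 (A : Matrix (Fin 5) (Fin 5) ℝ) (hsym : A.IsSymm)
    (hnn : ∀ i j, 0 ≤ A i j) (l : Fin 5 → ℝ)
    (hord : l 1 ≤ l 0 ∧ l 2 ≤ l 1 ∧ l 3 ≤ l 2 ∧ l 4 ≤ l 3)
    (hchar : A.charpoly = ∏ i, (X - C (l i))) :
    l 1 + l 4 ≤ A.trace := by
  have hanti : Antitone l :=
    Fin.antitone_iff_succ_le.mpr (by simpa [Fin.forall_fin_succ] using hord)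
  simpa using stmt_4_general A hsym hnn l hanti hchar
end

section
/- Let n be a positive integer and let λ₁ ≥ 0 ≥ λ₂ ≥ λ₃ ≥ ⋯ ≥ λₙ be real numbers with λ₁ + λ₂ + ⋯ + λₙ ≥ 0. Then there exists an n×n real symmetric matrix A with all entries nonnegative whose characteristic polynomial is (t−λ₁)(t−λ₂)⋯(t−λₙ); moreover λ₁ is the spectral radius (Perron eigenvalue) of A. -/
open Polynomial Matrix

/-!
Realize the eigenvalues one at a time. Let `A` be a nonnegative symmetric matrix with a nonnegative
eigenvector `u ≠ 0` for the eigenvalue `a + b`, where `b ≤ 0 ≤ a + b`. Bordering `A` by the row and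
column `s • u` and a zero corner leaves the spectrum of `A` unchanged, except that `a + b` is
replaced by the two roots of `t * (t - (a + b)) = s ^ 2 * (u ⬝ᵥ u)`. For
`s ^ 2 * (u ⬝ᵥ u) = -(a * b)` these are `a` and `b`, and the bordered matrix has a nonnegative
eigenvector for `a`. So start from the `1 × 1` matrix `(∑ i, l i)` and border it once for each
nonpositive eigenvalue. A nonnegative sum also makes the remaining eigenvalue dominate the absolute
values of these.
-/

section Charpoly

variable {ι R : Type*} [Fintype ι] [DecidableEq ι] [CommRing R]

theorem charmatrix_mulVec_of_mulVec_eq_smul {A : Matrix ι ι R} {v : ι → R} {a : R}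
    (hv : A *ᵥ v = a • v) :
    A.charmatrix *ᵥ (fun i => C (v i)) = (X - C a) • fun i => C (v i) := by
  have hmap : (A.map C) *ᵥ (fun i => C (v i)) = C a • fun i => C (v i) := by
    ext1 i
    simpa [mulVec, dotProduct] using congrArg C (congrFun hv i)
  rw [charmatrix, sub_mulVec, RingHom.mapMatrix_apply, hmap, sub_smul]
  congr 1
  ext1 i
  simp [mulVec_diagonal]

theorem charpoly_fromBlocks_mul_X_sub_C_of_mulVec_eq_smul {A : Matrix ι ι R} {v : ι → R} {a : R}
    (hv : A *ᵥ v = a • v) (w : ι → R) (d : R) :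
    (fromBlocks A (replicateCol Unit v) (replicateRow Unit w) (diagonal fun _ => d)).charpoly
        * (X - C a)
      = A.charpoly * ((X - C d) * (X - C a) - C (w ⬝ᵥ v)) := by
  -- Clear the upper right block by a column operation that inverts nothing.
  have triangular :
      (fromBlocks A (replicateCol Unit v) (replicateRow Unit w) (diagonal fun _ => d)).charmatrix
          * fromBlocks 1 (replicateCol Unit fun i => C (v i)) 0 (diagonal fun _ => X - C a)
        = fromBlocks A.charmatrix 0 (-(replicateRow Unit w).map C)
            (diagonal fun _ => (X - C d) * (X - C a) - C (w ⬝ᵥ v)) := by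
    rw [charmatrix_fromBlocks, fromBlocks_multiply]
    congr 1
    · simp
    · ext1 i j
      rw [← replicateCol_mulVec, charmatrix_mulVec_of_mulVec_eq_smul hv]
      simp [mul_comm]
    · simp
    · ext1 i j
      rw [charmatrix_diagonal, diagonal_mul_diagonal]
      simp [Matrix.mul_apply, dotProduct, neg_add_eq_sub]
  simpa [Matrix.charpoly, det_mul] using congrArg Matrix.det triangular

end Charpoly

theorem mem_spectrum_iff_of_charpoly_eq_prod {ι κ K : Type*} [Fintype ι] [DecidableEq ι]
    [Fintype κ] [Field K] {A : Matrix ι ι K} {l : κ → K} (hA : A.charpoly = ∏ i, (X - C (l i)))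
    {μ : K} : μ ∈ spectrum K A ↔ ∃ i, l i = μ := by
  rw [mem_spectrum_iff_isRoot_charpoly, hA, IsRoot.def, eval_prod, Finset.prod_eq_zero_iff]
  simp [sub_eq_zero, eq_comm]

theorem abs_le_of_nonpos_of_sum_nonneg {ι M : Type*} [Fintype ι] [AddCommGroup M] [LinearOrder M]
    [IsOrderedAddMonoid M] {l : ι → M} {i₀ : ι} (hl : ∀ i ≠ i₀, l i ≤ 0) (hsum : 0 ≤ ∑ i, l i)
    (i : ι) : |l i| ≤ l i₀ := by
  classical
  have sum_nonneg_of_mem {s : Finset ι} (hs : i₀ ∈ s) : 0 ≤ ∑ j ∈ s, l j :=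
    hsum.trans <| Finset.sum_le_sum_of_subset_of_nonpos' s.subset_univ
      fun j _ hj => hl j fun h => hj (h ▸ hs)
  by_cases hi : i = i₀
  · subst hi
    exact (abs_of_nonneg (by simpa using sum_nonneg_of_mem (Finset.mem_singleton_self i))).le
  · have hpair : 0 ≤ l i + l i₀ := by
      simpa [Finset.sum_pair hi] using sum_nonneg_of_mem (s := {i, i₀}) (by simp)
    rw [abs_of_nonpos (hl i hi)]
    exact neg_le_iff_add_nonneg'.2 hpair

/-- `A` is a nonnegative symmetric matrix and `u` is a Perron vector of it, that is, a nonzero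
nonnegative eigenvector, with eigenvalue `a`. The vector is not normalized. -/
structure IsPerronPair {ι : Type*} [Fintype ι] (A : Matrix ι ι ℝ) (a : ℝ) (u : ι → ℝ) : Prop where
  isSymm : A.IsSymm
  nonneg : ∀ i j, 0 ≤ A i j
  vec_nonneg : ∀ i, 0 ≤ u i
  vec_ne_zero : u ≠ 0
  mulVec_eq_smul : A *ᵥ u = a • u

namespace IsPerronPair

variable {ι : Type*} [Fintype ι] {A : Matrix ι ι ℝ} {a b : ℝ} {u : ι → ℝ}

theorem dotProduct_self_pos (h : IsPerronPair A a u) : 0 < u ⬝ᵥ u := by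
  simpa using dotProduct_star_self_pos_iff.2 h.vec_ne_zero

theorem eigenvalue_nonneg (h : IsPerronPair A a u) : 0 ≤ a := by
  have hquad : 0 ≤ a * (u ⬝ᵥ u) := by
    rw [← smul_eq_mul, ← dotProduct_smul, ← h.mulVec_eq_smul]
    exact Finset.sum_nonneg fun i _ => mul_nonneg (h.vec_nonneg i) <|
      Finset.sum_nonneg fun j _ => mul_nonneg (h.nonneg i j) (h.vec_nonneg j)
  exact nonneg_of_mul_nonneg_left hquad h.dotProduct_self_pos

theorem diagonal_unit (ha : 0 ≤ a) : IsPerronPair (diagonal fun _ : Unit => a) a 1 where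
  isSymm := isSymm_diagonal _
  nonneg _ _ := by simpa
  vec_nonneg _ := zero_le_one
  vec_ne_zero := one_ne_zero
  mulVec_eq_smul := by ext; simp [mulVec_diagonal]

theorem fromBlocks {c s y : ℝ} (h : IsPerronPair A c u) (hs : 0 ≤ s) (hy : 0 ≤ y)
    (hupper : c + s * y = a) (hlower : s * (u ⬝ᵥ u) = a * y) :
    IsPerronPair
      (Matrix.fromBlocks A (replicateCol Unit (s • u)) (replicateRow Unit (s • u)) 0)
      a (Sum.elim u fun _ => y) where
  isSymm := h.isSymm.fromBlocks rfl isSymm_zero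
  nonneg := by
    rintro (i | _) (j | _)
    · exact h.nonneg i j
    · exact mul_nonneg hs (h.vec_nonneg i)
    · exact mul_nonneg hs (h.vec_nonneg j)
    · exact le_rfl
  vec_nonneg := Sum.rec h.vec_nonneg fun _ => hy
  vec_ne_zero hzero := h.vec_ne_zero (funext fun i => congrFun hzero (Sum.inl i))
  mulVec_eq_smul := by
    rw [fromBlocks_mulVec, Sum.elim_comp_inl, Sum.elim_comp_inr, h.mulVec_eq_smul]
    ext (i | _)
    · simp [mulVec, dotProduct, ← hupper, add_mul, mul_right_comm]
    · simpa [mulVec, dotProduct, Finset.mul_sum, mul_assoc] using hlower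

theorem exists_bordered [DecidableEq ι] (h : IsPerronPair A (a + b) u) (hb : b ≤ 0) :
    ∃ (B : Matrix (ι ⊕ Unit) (ι ⊕ Unit) ℝ) (w : ι ⊕ Unit → ℝ), IsPerronPair B a w ∧
      B.charpoly * (X - C (a + b)) = A.charpoly * ((X - C a) * (X - C b)) := by
  have hab := h.eigenvalue_nonneg
  have ha : 0 ≤ a := by linarith
  have hu := h.dotProduct_self_pos
  set s := √(-(a * b) / (u ⬝ᵥ u)) with hs
  have hs_sq : s * s * (u ⬝ᵥ u) = -(a * b) := by
    rw [hs, Real.mul_self_sqrt (div_nonneg (by nlinarith) hu.le), div_mul_cancel₀ _ hu.ne']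
  obtain ⟨y, hy, hupper, hlower⟩ : ∃ y, 0 ≤ y ∧ a + b + s * y = a ∧ s * (u ⬝ᵥ u) = a * y := by
    rcases ha.eq_or_lt with rfl | ha_pos
    · exact ⟨0, le_rfl, by linarith, by simp [hs]⟩
    · refine ⟨s * (u ⬝ᵥ u) / a, by positivity, ?_, by field_simp⟩
      field_simp
      linarith
  refine ⟨_, _, h.fromBlocks (Real.sqrt_nonneg _) hy hupper hlower, ?_⟩
  have heigen : A *ᵥ (s • u) = (a + b) • s • u := by
    rw [mulVec_smul, h.mulVec_eq_smul, smul_comm]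
  have hcharpoly := charpoly_fromBlocks_mul_X_sub_C_of_mulVec_eq_smul heigen (s • u) 0
  have hnorm : (s • u) ⬝ᵥ (s • u) = -(a * b) := by
    rw [smul_dotProduct, dotProduct_smul, smul_eq_mul, smul_eq_mul, ← mul_assoc, hs_sq]
  rw [diagonal_zero, hnorm] at hcharpoly
  rw [hcharpoly]
  simp only [C_neg, C_mul, C_add, C_0]
  ring

end IsPerronPair

theorem exists_isPerronPair_charpoly_eq {κ : Type*} (s : Finset κ) {l : κ → ℝ} {a : ℝ}
    (hl : ∀ i ∈ s, l i ≤ 0) (hsum : 0 ≤ a + ∑ i ∈ s, l i) :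
    ∃ (ι : Type) (_ : Fintype ι) (_ : DecidableEq ι) (A : Matrix ι ι ℝ) (u : ι → ℝ),
      IsPerronPair A a u ∧ A.charpoly = (X - C a) * ∏ i ∈ s, (X - C (l i)) := by
  classical
  induction s using Finset.induction_on generalizing a with
  | empty =>
    refine ⟨Unit, inferInstance, inferInstance, _, _, .diagonal_unit (by simpa using hsum), ?_⟩
    simp [charpoly_diagonal]
  | insert j s hj ih =>
    rw [Finset.sum_insert hj, ← add_assoc] at hsum
    obtain ⟨hlj, hls⟩ := (Finset.forall_mem_insert _ _ _).1 hl
    obtain ⟨ι, _, _, A, u, hA, hA_charpoly⟩ := ih hls hsum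
    obtain ⟨B, w, hB, hB_charpoly⟩ := hA.exists_bordered hlj
    refine ⟨ι ⊕ Unit, inferInstance, inferInstance, B, w, hB, ?_⟩
    refine mul_right_cancel₀ (X_sub_C_ne_zero (a + l j)) ?_
    rw [hB_charpoly, hA_charpoly, Finset.prod_insert hj]
    ring

theorem exists_isSymm_nonneg_charpoly_eq_prod {ι : Type*} [Fintype ι] [DecidableEq ι] {l : ι → ℝ}
    {i₀ : ι} (hl : ∀ i ≠ i₀, l i ≤ 0) (hsum : 0 ≤ ∑ i, l i) :
    ∃ A : Matrix ι ι ℝ, A.IsSymm ∧ (∀ i j, 0 ≤ A i j) ∧ A.charpoly = ∏ i, (X - C (l i)) := by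
  rw [← Finset.add_sum_erase _ _ (Finset.mem_univ i₀)] at hsum
  obtain ⟨κ, _, _, A, u, hA, hcharpoly⟩ := exists_isPerronPair_charpoly_eq
    (Finset.univ.erase i₀) (fun i hi => hl i (Finset.ne_of_mem_erase hi)) hsum
  rw [Finset.mul_prod_erase _ (fun i => X - C (l i)) (Finset.mem_univ i₀)] at hcharpoly
  have hcard : Fintype.card κ = Fintype.card ι := by
    simpa [charpoly_natDegree_eq_dim, natDegree_prod_of_monic, monic_X_sub_C]
      using congrArg natDegree hcharpoly
  let e : κ ≃ ι := Fintype.equivOfCardEq hcard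
  exact ⟨reindex e e A, hA.isSymm.submatrix _, fun _ _ => hA.nonneg _ _,
    (charpoly_reindex e A).trans hcharpoly⟩

theorem stmt_5_general {ι : Type*} [Fintype ι] [DecidableEq ι] (l : ι → ℝ) (i₀ : ι)
    (hneg : ∀ i ≠ i₀, l i ≤ 0) (hsum : 0 ≤ ∑ i, l i) :
    ∃ A : Matrix ι ι ℝ, A.IsSymm ∧ (∀ i j, 0 ≤ A i j) ∧
      A.charpoly = ∏ i, (X - C (l i)) ∧
      l i₀ ∈ spectrum ℝ A ∧ ∀ μ ∈ spectrum ℝ A, |μ| ≤ l i₀ := by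
  obtain ⟨A, hsymm, hnonneg, hcharpoly⟩ := exists_isSymm_nonneg_charpoly_eq_prod hneg hsum
  refine ⟨A, hsymm, hnonneg, hcharpoly,
    (mem_spectrum_iff_of_charpoly_eq_prod hcharpoly).2 ⟨i₀, rfl⟩, fun μ hμ => ?_⟩
  obtain ⟨i, rfl⟩ := (mem_spectrum_iff_of_charpoly_eq_prod hcharpoly).1 hμ
  exact abs_le_of_nonpos_of_sum_nonneg hneg hsum i

theorem stmt_5 (n : ℕ) (hn : 0 < n) (l : Fin n → ℝ)
    (h0 : 0 ≤ l ⟨0, hn⟩)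
    (hneg : ∀ i : Fin n, 1 ≤ (i : ℕ) → l i ≤ 0)
    (hmono : ∀ i j : Fin n, i ≤ j → l j ≤ l i)
    (hsum : 0 ≤ ∑ i, l i) :
    ∃ A : Matrix (Fin n) (Fin n) ℝ, A.IsSymm ∧ (∀ i j, 0 ≤ A i j) ∧
      A.charpoly = ∏ i, (X - C (l i)) ∧
      l ⟨0, hn⟩ ∈ spectrum ℝ A ∧ ∀ μ ∈ spectrum ℝ A, |μ| ≤ l ⟨0, hn⟩ :=
  stmt_5_general l ⟨0, hn⟩
    (fun i hi => hneg i (Nat.one_le_iff_ne_zero.2 fun h => hi (Fin.ext h))) hsum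
end

section
/- Let S be an m×m real symmetric matrix with all entries nonnegative whose eigenvalues (with multiplicity) are α₁, α₂, …, α_m, where α₁ is the spectral radius of S. Let T be an n×n real symmetric matrix with all entries nonnegative whose eigenvalues (with multiplicity) are β₁, β₂, …, β_n, where β₁ is the spectral radius of T. Suppose α₁ ≥ β₁ and ε ≥ 0. Then there exists an (m+n)×(m+n) real symmetric matrix with all entries nonnegative whose eigenvalues (with multiplicity) are α₁+ε, β₁−ε, α₂, …, α_m, β₂, …, β_n, and whose spectral radius is α₁+ε. -/
open Polynomial Matrix

/-!
Let `u` and `v` be nonnegative unit eigenvectors of `S` and `T` for `α₁` and `β₁`. The wanted matrix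
is the block matrix with diagonal blocks `S`, `T` and off-diagonal blocks `r u vᵀ`, `r v uᵀ`, where
`r² = ε (α₁ - β₁ + ε)`. It is a perturbation of `S ⊕ T` along the invariant subspace spanned by `u`
and `v`, so by Rado's theorem only the eigenvalues `α₁`, `β₁` change: they become the eigenvalues
`α₁ + ε`, `β₁ - ε` of the `2 × 2` matrix with diagonal `α₁`, `β₁` and off-diagonal entries `r`.
-/

section NonnegativeEigenvector

variable {ι : Type*} [Fintype ι]

theorem abs_dotProduct_abs {R : Type*} [Ring R] [LinearOrder R] [IsOrderedRing R]
    (w : ι → R) : |w| ⬝ᵥ |w| = w ⬝ᵥ w := by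
  simp only [dotProduct, Pi.abs_apply, abs_mul_abs_self]

theorem dotProduct_mulVec_le_abs {R : Type*} [Ring R] [LinearOrder R] [IsOrderedRing R]
    {A : Matrix ι ι R} (hA : ∀ i j, 0 ≤ A i j) (w : ι → R) :
    w ⬝ᵥ (A *ᵥ w) ≤ |w| ⬝ᵥ (A *ᵥ |w|) := by
  simp only [dotProduct, mulVec, Finset.mul_sum]
  refine Finset.sum_le_sum fun i _ => Finset.sum_le_sum fun j _ => ?_
  calc w i * (A i j * w j) ≤ |w i * (A i j * w j)| := le_abs_self _
    _ = |w| i * (A i j * |w| j) := by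
      rw [abs_mul, abs_mul, abs_of_nonneg (hA i j), Pi.abs_apply, Pi.abs_apply]

variable [DecidableEq ι]

theorem smul_one_sub_mulVec {R : Type*} [Ring R] (A : Matrix ι ι R) (a : R) (w : ι → R) :
    (a • (1 : Matrix ι ι R) - A) *ᵥ w = a • w - A *ᵥ w := by
  rw [sub_mulVec, smul_mulVec, one_mulVec]

theorem posSemidef_smul_one_sub_of_spectrum_le {A : Matrix ι ι ℝ} {a : ℝ} (hA : A.IsSymm)
    (ha : ∀ μ ∈ spectrum ℝ A, μ ≤ a) : (a • (1 : Matrix ι ι ℝ) - A).PosSemidef := by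
  refine posSemidef_iff_isHermitian_and_spectrum_nonneg.2 ⟨?_, ?_⟩
  · rw [IsHermitian, conjTranspose_eq_transpose_of_trivial, transpose_sub, transpose_smul,
      transpose_one, hA.eq]
  · rw [← Algebra.algebraMap_eq_smul_one, ← spectrum.singleton_sub_eq, Set.singleton_sub]
    rintro _ ⟨μ, hμ, rfl⟩
    exact sub_nonneg.2 (ha μ hμ)

-- The quadratic form of `a - A` is positive semidefinite and vanishes at `w`, and passing to `|w|`
-- does not increase it, so it vanishes at `|w|` as well.
theorem mulVec_abs_eq_smul_abs {A : Matrix ι ι ℝ} {a : ℝ} {w : ι → ℝ} (hA : A.IsSymm)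
    (hnonneg : ∀ i j, 0 ≤ A i j) (ha : ∀ μ ∈ spectrum ℝ A, μ ≤ a) (hw : A *ᵥ w = a • w) :
    A *ᵥ |w| = a • |w| := by
  have hpsd := posSemidef_smul_one_sub_of_spectrum_le hA ha
  have hform_nonpos : |w| ⬝ᵥ ((a • (1 : Matrix ι ι ℝ) - A) *ᵥ |w|) ≤ 0 :=
    calc |w| ⬝ᵥ ((a • (1 : Matrix ι ι ℝ) - A) *ᵥ |w|)
        = a * (w ⬝ᵥ w) - |w| ⬝ᵥ (A *ᵥ |w|) := by
          rw [smul_one_sub_mulVec, dotProduct_sub, dotProduct_smul, abs_dotProduct_abs, smul_eq_mul]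
      _ ≤ a * (w ⬝ᵥ w) - w ⬝ᵥ (A *ᵥ w) := sub_le_sub_left (dotProduct_mulVec_le_abs hnonneg w) _
      _ = 0 := by rw [hw, dotProduct_smul, smul_eq_mul, sub_self]
  have hform_zero : star |w| ⬝ᵥ ((a • (1 : Matrix ι ι ℝ) - A) *ᵥ |w|) = 0 :=
    le_antisymm hform_nonpos (hpsd.dotProduct_mulVec_nonneg |w|)
  have hker := (hpsd.dotProduct_mulVec_zero_iff |w|).1 hform_zero
  rw [smul_one_sub_mulVec, sub_eq_zero] at hker
  exact hker.symm

theorem exists_mulVec_eq_smul_of_mem_spectrum {K : Type*} [Field K] {A : Matrix ι ι K} {a : K}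
    (ha : a ∈ spectrum K A) : ∃ w ≠ 0, A *ᵥ w = a • w := by
  rw [← spectrum_toLin'] at ha
  obtain ⟨w, hw⟩ := (Module.End.HasEigenvalue.of_mem_spectrum ha).exists_hasEigenvector
  exact ⟨w, hw.2, hw.apply_eq_smul⟩

theorem exists_nonneg_unit_eigenvector {A : Matrix ι ι ℝ} {a : ℝ} (hA : A.IsSymm)
    (hnonneg : ∀ i j, 0 ≤ A i j) (ha_mem : a ∈ spectrum ℝ A) (ha : ∀ μ ∈ spectrum ℝ A, μ ≤ a) :
    ∃ u : ι → ℝ, 0 ≤ u ∧ u ⬝ᵥ u = 1 ∧ A *ᵥ u = a • u := by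
  obtain ⟨w, hw_ne, hw⟩ := exists_mulVec_eq_smul_of_mem_spectrum ha_mem
  have hnorm_pos : 0 < w ⬝ᵥ w := by
    simpa only [star_trivial] using dotProduct_star_self_pos_iff.2 hw_ne
  refine ⟨(√(w ⬝ᵥ w))⁻¹ • |w|, smul_nonneg (by positivity) (abs_nonneg w), ?_, ?_⟩
  · rw [smul_dotProduct, dotProduct_smul, abs_dotProduct_abs, smul_eq_mul, smul_eq_mul,
      ← mul_assoc, ← mul_inv, Real.mul_self_sqrt hnorm_pos.le, inv_mul_cancel₀ hnorm_pos.ne']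
  · rw [mulVec_smul, mulVec_abs_eq_smul_abs hA hnonneg ha hw, smul_comm]

end NonnegativeEigenvector

section Rado

variable {R ι κ : Type*} [CommRing R] [Fintype ι] [DecidableEq ι] [Fintype κ] [DecidableEq κ]

theorem det_sub_mul_mul_det {A : Matrix ι ι R} {L : Matrix κ κ R} {U : Matrix ι κ R}
    (W : Matrix κ ι R) (hU : A * U = U * L) :
    (A - U * W).det * L.det = A.det * (L - W * U).det := by
  have hfactor : fromBlocks A U W 1 * fromBlocks 1 (-U) 0 L = fromBlocks A 0 W (L - W * U) := by
    rw [fromBlocks_multiply]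
    simp [hU, sub_eq_neg_add]
  simpa [det_fromBlocks_one₂₂] using congrArg det hfactor

/-- **Rado's theorem**: perturbing `A` along the invariant column space of `U` replaces the part `L`
of the spectrum carried by that subspace and keeps the rest. -/
theorem charpoly_add_mul_mul_charpoly_s6 {A : Matrix ι ι R} {L : Matrix κ κ R} {U : Matrix ι κ R}
    (W : Matrix κ ι R) (hU : A * U = U * L) :
    (A + U * W).charpoly * L.charpoly = A.charpoly * (L + W * U).charpoly := by
  have hchar : A.charmatrix * U.map C = U.map C * L.charmatrix := by
    simp only [charmatrix, Matrix.sub_mul, Matrix.mul_sub, RingHom.mapMatrix_apply,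
      ← Matrix.map_mul, hU, scalar_apply, ← smul_one_eq_diagonal, Matrix.smul_mul,
      Matrix.mul_smul, Matrix.one_mul, Matrix.mul_one]
  simpa [charpoly, charmatrix, Matrix.map_add, sub_sub] using
    det_sub_mul_mul_det (W.map C) hchar

end Rado

section Coupling

variable {R ι κ : Type*} [CommRing R]

theorem charpoly_fin_two_of (a b c d : R) :
    !![a, b; c, d].charpoly = (X - C a) * (X - C d) - C (b * c) := by
  simp [charpoly, det_fin_two]

/-- The block matrix coupling `S` and `T` through the rank-one off-diagonal blocks `r u vᵀ` and
`r v uᵀ`. When `u` and `v` are unit eigenvectors, it moves their two eigenvalues and fixes the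
remaining ones. -/
def rankOneCoupling (S : Matrix ι ι R) (T : Matrix κ κ R) (u : ι → R) (v : κ → R) (r : R) :
    Matrix (ι ⊕ κ) (ι ⊕ κ) R :=
  fromBlocks S (r • vecMulVec u v) (r • vecMulVec v u) T

namespace rankOneCoupling

variable {S : Matrix ι ι R} {T : Matrix κ κ R} {u : ι → R} {v : κ → R}

theorem isSymm (hS : S.IsSymm) (hT : T.IsSymm) (u : ι → R) (v : κ → R) (r : R) :
    (rankOneCoupling S T u v r).IsSymm :=
  hS.fromBlocks (by rw [transpose_smul, transpose_vecMulVec]) hT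

theorem nonneg [PartialOrder R] [IsOrderedRing R] {r : R} (hS : ∀ i j, 0 ≤ S i j)
    (hT : ∀ i j, 0 ≤ T i j) (hu : 0 ≤ u) (hv : 0 ≤ v) (hr : 0 ≤ r) :
    ∀ i j, 0 ≤ rankOneCoupling S T u v r i j := by
  rintro (i | i) (j | j)
  · exact hS i j
  · exact mul_nonneg hr (mul_nonneg (hu i) (hv j))
  · exact mul_nonneg hr (mul_nonneg (hv i) (hu j))
  · exact hT i j

variable [Fintype ι] [DecidableEq ι] [Fintype κ] [DecidableEq κ]

theorem charpoly_mul {a b : R} (hSu : S *ᵥ u = a • u) (hTv : T *ᵥ v = b • v) (r : R) :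
    (rankOneCoupling S T u v r).charpoly * ((X - C a) * (X - C b)) =
      S.charpoly * T.charpoly * ((X - C a) * (X - C b) - C (r ^ 2 * (u ⬝ᵥ u) * (v ⬝ᵥ v))) := by
  let U : Matrix (ι ⊕ κ) (Fin 2) R := (of ![Sum.elim u 0, Sum.elim 0 v])ᵀ
  let W : Matrix (Fin 2) (ι ⊕ κ) R := of ![Sum.elim 0 (r • v), Sum.elim (r • u) 0]
  have hinvariant : fromBlocks S 0 0 T * U = U * !![a, 0; 0, b] := by
    ext (i | i) k <;> fin_cases k
    · simpa [U, mul_apply, mulVec, dotProduct, mul_comm a] using congrFun hSu i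
    · simp [U, mul_apply]
    · simp [U, mul_apply]
    · simpa [U, mul_apply, mulVec, dotProduct, mul_comm b] using congrFun hTv i
  have hcoupling : rankOneCoupling S T u v r = fromBlocks S 0 0 T + U * W := by
    ext (i | i) (j | j) <;>
      simp [rankOneCoupling, U, W, mul_apply, vecMulVec_apply, mul_left_comm]
  have hcompression : W * U = !![0, r * (v ⬝ᵥ v); r * (u ⬝ᵥ u), 0] := by
    ext k l
    fin_cases k <;> fin_cases l <;> simp [U, W, mul_apply, dotProduct, Finset.mul_sum, mul_assoc]
  have hsum : !![a, 0; 0, b] + W * U = !![a, r * (v ⬝ᵥ v); r * (u ⬝ᵥ u), b] := by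
    simp [hcompression]
  have hrado := charpoly_add_mul_mul_charpoly_s6 W hinvariant
  rw [← hcoupling, hsum, charpoly_fromBlocks_zero₁₂, charpoly_fin_two_of, charpoly_fin_two_of,
    mul_zero, C_0, sub_zero] at hrado
  rw [hrado]
  congr 3
  ring

theorem charpoly_of_sq_eq {a b r ε : R} {p q : R[X]} (hu : u ⬝ᵥ u = 1) (hv : v ⬝ᵥ v = 1)
    (hSu : S *ᵥ u = a • u) (hTv : T *ᵥ v = b • v) (hS : S.charpoly = (X - C a) * p)
    (hT : T.charpoly = (X - C b) * q) (hr : r ^ 2 = ε * (a - b + ε)) :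
    (rankOneCoupling S T u v r).charpoly = (X - C (a + ε)) * (X - C (b - ε)) * p * q := by
  have hregular : IsRightRegular ((X - C a) * (X - C b)) :=
    ((monic_X_sub_C a).mul (monic_X_sub_C b)).isRegular.right
  apply hregular
  dsimp only
  rw [charpoly_mul hSu hTv, hS, hT, hu, hv, mul_one, mul_one, hr]
  simp only [C_add, C_sub, C_mul]
  ring

end rankOneCoupling

end Coupling

section Spectrum

variable {ι : Type*} [Fintype ι] [DecidableEq ι]

theorem mem_spectrum_of_X_sub_C_dvd_charpoly {K : Type*} [Field K] {A : Matrix ι ι K} {a : K}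
    (h : X - C a ∣ A.charpoly) : a ∈ spectrum K A :=
  mem_spectrum_iff_isRoot_charpoly.2 (dvd_iff_isRoot.1 h)

theorem abs_le_of_mem_spectrum_of_charpoly_eq {κ ν : Type*} [Fintype κ] [DecidableEq κ] [Fintype ν]
    [DecidableEq ν] {S : Matrix ι ι ℝ} {T : Matrix κ κ ℝ} {R : Matrix ν ν ℝ} {a b ε : ℝ}
    {p q : ℝ[X]} (hS : p ∣ S.charpoly) (hT : q ∣ T.charpoly)
    (hR : R.charpoly = (X - C (a + ε)) * (X - C (b - ε)) * p * q)
    (hSrad : ∀ μ ∈ spectrum ℝ S, |μ| ≤ a) (hTrad : ∀ μ ∈ spectrum ℝ T, |μ| ≤ b)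
    (hb : 0 ≤ b) (hab : b ≤ a) (hε : 0 ≤ ε) :
    ∀ μ ∈ spectrum ℝ R, |μ| ≤ a + ε := by
  intro μ hμ
  rw [mem_spectrum_iff_isRoot_charpoly, hR, root_mul, root_mul, root_mul, root_X_sub_C,
    root_X_sub_C] at hμ
  rcases hμ with ((rfl | rfl) | hp) | hq
  · rw [abs_of_nonneg (add_nonneg (hb.trans hab) hε)]
  · rw [abs_le]
    constructor <;> linarith
  · linarith [hSrad μ (mem_spectrum_iff_isRoot_charpoly.2 (hp.dvd hS))]
  · linarith [hTrad μ (mem_spectrum_iff_isRoot_charpoly.2 (hq.dvd hT))]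

end Spectrum

theorem stmt_6 (m n : ℕ) (α : Fin (m + 1) → ℝ) (β : Fin (n + 1) → ℝ)
    (S : Matrix (Fin (m + 1)) (Fin (m + 1)) ℝ) (T : Matrix (Fin (n + 1)) (Fin (n + 1)) ℝ)
    (hSsym : S.IsSymm) (hSnn : ∀ i j, 0 ≤ S i j)
    (hSchar : S.charpoly = ∏ i, (X - C (α i)))
    (hSrad : ∀ μ ∈ spectrum ℝ S, |μ| ≤ α 0)
    (hTsym : T.IsSymm) (hTnn : ∀ i j, 0 ≤ T i j)
    (hTchar : T.charpoly = ∏ i, (X - C (β i)))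
    (hTrad : ∀ μ ∈ spectrum ℝ T, |μ| ≤ β 0)
    (hab : β 0 ≤ α 0) (ε : ℝ) (hε : 0 ≤ ε) :
    ∃ R : Matrix (Fin (m + 1 + (n + 1))) (Fin (m + 1 + (n + 1))) ℝ,
      R.IsSymm ∧ (∀ i j, 0 ≤ R i j) ∧
      R.charpoly = (X - C (α 0 + ε)) * (X - C (β 0 - ε)) *
        (∏ i : Fin m, (X - C (α i.succ))) * (∏ j : Fin n, (X - C (β j.succ))) ∧
      (α 0 + ε) ∈ spectrum ℝ R ∧ ∀ μ ∈ spectrum ℝ R, |μ| ≤ α 0 + ε := by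
  rw [Fin.prod_univ_succ] at hSchar hTchar
  have hαmem : α 0 ∈ spectrum ℝ S := mem_spectrum_of_X_sub_C_dvd_charpoly ⟨_, hSchar⟩
  have hβmem : β 0 ∈ spectrum ℝ T := mem_spectrum_of_X_sub_C_dvd_charpoly ⟨_, hTchar⟩
  have hβ : 0 ≤ β 0 := (abs_nonneg _).trans (hTrad _ hβmem)
  obtain ⟨u, hu, hu_unit, hSu⟩ := exists_nonneg_unit_eigenvector hSsym hSnn hαmem
    fun μ hμ => (le_abs_self μ).trans (hSrad μ hμ)
  obtain ⟨v, hv, hv_unit, hTv⟩ := exists_nonneg_unit_eigenvector hTsym hTnn hβmem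
    fun μ hμ => (le_abs_self μ).trans (hTrad μ hμ)
  let r := √(ε * (α 0 - β 0 + ε))
  have hr : r ^ 2 = ε * (α 0 - β 0 + ε) :=
    Real.sq_sqrt (mul_nonneg hε (add_nonneg (sub_nonneg.2 hab) hε))
  let R := reindex finSumFinEquiv finSumFinEquiv (rankOneCoupling S T u v r)
  have hRchar : R.charpoly = (X - C (α 0 + ε)) * (X - C (β 0 - ε)) *
      (∏ i : Fin m, (X - C (α i.succ))) * (∏ j : Fin n, (X - C (β j.succ))) :=
    (charpoly_reindex ..).trans
      (rankOneCoupling.charpoly_of_sq_eq hu_unit hv_unit hSu hTv hSchar hTchar hr)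
  refine ⟨R, (rankOneCoupling.isSymm hSsym hTsym u v r).submatrix _,
    fun _ _ => rankOneCoupling.nonneg hSnn hTnn hu hv (Real.sqrt_nonneg _) _ _, hRchar, ?_, ?_⟩
  · exact mem_spectrum_of_X_sub_C_dvd_charpoly (by simp only [hRchar, mul_assoc, dvd_mul_right])
  · exact abs_le_of_mem_spectrum_of_charpoly_eq ⟨_, hSchar.trans (mul_comm ..)⟩
      ⟨_, hTchar.trans (mul_comm ..)⟩ hRchar hSrad hTrad hβ hab hε
end

section
/- Let n ≥ 4 and let λ₁ ≥ λ₂ ≥ 0 ≥ λ₃ ≥ ⋯ ≥ λₙ be real numbers with λ₁ + λ₂ + ⋯ + λₙ ≥ 0. Suppose K₁, K₂ is a partition of {3, 4, …, n} (i.e., K₁ ∪ K₂ = {3,…,n} and K₁ ∩ K₂ = ∅) such that λ₁ ≥ −∑_{i∈K₁} λᵢ ≥ −∑_{i∈K₂} λᵢ. Then there exists an n×n real symmetric matrix A with all entries nonnegative whose characteristic polynomial is (t−λ₁)(t−λ₂)⋯(t−λₙ); moreover λ₁ is the spectral radius (Perron eigenvalue) of A. -/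
open Polynomial Matrix

/-!
Fiedler's coupling: let `A`, `B` be nonnegative symmetric matrices with nonnegative unit
eigenvectors `u`, `v` for `a`, `b`. Joining them by the off-diagonal blocks `ρ u vᵀ` and `ρ v uᵀ`
with `ρ ≥ 0` replaces `a`, `b` in the spectrum by the two eigenvalues of `!![a, ρ; ρ, b]` and keeps
all others. Choosing `ρ` suitably, these are any `x ≥ y` with `x + y = a + b` and `y ≤ b ≤ x`, and
`x` again has a nonnegative eigenvector. Coupling with `1 × 1` zero matrices adds nonpositive
eigenvalues one at a time, so nonpositive numbers of sum `-σ` together with any `a ≥ σ` are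
realizable. Finally, couple two such matrices, one for `K₁` and one for `K₂`, whose leading
eigenvalues `λ₁ + λ₂ - b` and `b = max λ₂ (-∑ i ∈ K₂, λᵢ)` merge into `λ₁` and `λ₂`.
-/

section LowRankPerturbation

variable {R m n : Type*} [CommRing R] [Fintype m] [Fintype n] [DecidableEq m] [DecidableEq n]

theorem det_sub_mul_mul_det_of_intertwine {T : Matrix m m R} {L : Matrix n n R} {U : Matrix m n R}
    (hTU : T * U = U * L) (W : Matrix n m R) :
    (T - U * W).det * L.det = T.det * (L - W * U).det := by
  -- Both sides are `det (fromBlocks T (T * U) W L)`: the upper right corner can be cleared by a row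
  -- operation or by a column operation.
  have row_reduced : fromBlocks 1 (-U) 0 1 * fromBlocks T (T * U) W L =
      fromBlocks (T - U * W) 0 W L := by
    simp [fromBlocks_multiply, hTU, sub_eq_add_neg]
  have column_reduced : fromBlocks T (T * U) W L * fromBlocks 1 (-U) 0 1 =
      fromBlocks T 0 W (L - W * U) := by
    simp [fromBlocks_multiply, sub_eq_neg_add]
  calc (T - U * W).det * L.det
      = (fromBlocks 1 (-U) 0 1 * fromBlocks T (T * U) W L).det := by
        rw [row_reduced, det_fromBlocks_zero₁₂]
    _ = (fromBlocks T (T * U) W L * fromBlocks 1 (-U) 0 1).det := det_mul_comm _ _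
    _ = T.det * (L - W * U).det := by rw [column_reduced, det_fromBlocks_zero₁₂]

theorem charpoly_add_mul_mul_charpoly_of_intertwine {A : Matrix m m R} {L : Matrix n n R}
    {U : Matrix m n R} (hAU : A * U = U * L) (W : Matrix n m R) :
    (A + U * W).charpoly * L.charpoly = A.charpoly * (L + W * U).charpoly := by
  have charmatrix_mul : charmatrix A * U.map C = U.map C * charmatrix L := by
    simp only [charmatrix, Matrix.sub_mul, Matrix.mul_sub, RingHom.mapMatrix_apply,
      ← Matrix.map_mul, hAU]
    congr 1
    ext i j : 2
    simp [X_mul_C]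
  have h := det_sub_mul_mul_det_of_intertwine charmatrix_mul (W.map C)
  simpa only [charpoly, charmatrix, sub_sub, RingHom.mapMatrix_apply, ← Matrix.map_mul,
    ← Matrix.map_add C (map_add C)] using h

theorem charpoly_fromBlocks_vecMulVec_mul {A : Matrix m m R} {B : Matrix n n R} {a b : R}
    {u : m → R} {v : n → R} (hAu : A *ᵥ u = a • u) (hBv : B *ᵥ v = b • v)
    (y : m → R) (z : n → R) :
    (fromBlocks A (vecMulVec u z) (vecMulVec v y) B).charpoly * ((X - C a) * (X - C b)) =
      A.charpoly * B.charpoly * ((X - C a) * (X - C b) - C (y ⬝ᵥ u * z ⬝ᵥ v)) := by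
  let U : Matrix (m ⊕ n) (Fin 2) R := (Matrix.of ![Sum.elim u 0, Sum.elim 0 v])ᵀ
  let W : Matrix (Fin 2) (m ⊕ n) R := Matrix.of ![Sum.elim 0 z, Sum.elim y 0]
  have intertwine : fromBlocks A 0 0 B * U = U * !![a, 0; 0, b] := by
    ext (i | i) k
    · have hi := congrFun hAu i
      fin_cases k <;> simp_all [U, mul_apply, mulVec, dotProduct, mul_comm]
    · have hi := congrFun hBv i
      fin_cases k <;> simp_all [U, mul_apply, mulVec, dotProduct, mul_comm]
  have perturbed : fromBlocks A 0 0 B + U * W =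
      fromBlocks A (vecMulVec u z) (vecMulVec v y) B := by
    ext (i | i) (j | j) <;> simp [U, W, mul_apply, vecMulVec_apply]
  have compressed : !![a, 0; 0, b] + W * U = !![a, z ⬝ᵥ v; y ⬝ᵥ u, b] := by
    ext k l
    fin_cases k <;> fin_cases l <;> simp [U, W, dotProduct, vecMul, Matrix.transpose]
  have h := charpoly_add_mul_mul_charpoly_of_intertwine intertwine W
  rw [perturbed, compressed, charpoly_fromBlocks_zero₁₂] at h
  simpa [charpoly, det_fin_two, charmatrix, mul_comm (y ⬝ᵥ u)] using h

end LowRankPerturbation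

theorem spectrum_eq_range_of_charpoly_eq_prod {K ι n : Type*} [Field K] [Fintype ι] [Fintype n]
    [DecidableEq n] {A : Matrix n n K} {l : ι → K} (hA : A.charpoly = ∏ i, (X - C (l i))) :
    spectrum K A = Set.range l := by
  ext μ
  simp [mem_spectrum_iff_isRoot_charpoly, hA, eval_prod, Finset.prod_eq_zero_iff, sub_eq_zero,
    eq_comm (a := μ)]

/-- `A` is a symmetric matrix with nonnegative entries, and `u` is a nonnegative eigenvector of `A`
for `a`, of Euclidean norm `1`. This is the data along which two matrices are coupled. -/
structure IsNonnegEigenpair {V : Type*} [Fintype V] (A : Matrix V V ℝ) (a : ℝ) (u : V → ℝ) :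
    Prop where
  isSymm : A.IsSymm
  nonneg : ∀ i j, 0 ≤ A i j
  vec_nonneg : ∀ i, 0 ≤ u i
  dotProduct_self : u ⬝ᵥ u = 1
  mulVec_eq : A *ᵥ u = a • u

theorem IsNonnegEigenpair.fromBlocks_vecMulVec {V W : Type*} [Fintype V] [Fintype W]
    {A : Matrix V V ℝ} {B : Matrix W W ℝ} {a b x ρ c s : ℝ} {u : V → ℝ} {v : W → ℝ}
    (hA : IsNonnegEigenpair A a u) (hB : IsNonnegEigenpair B b v)
    (hρ : 0 ≤ ρ) (hc : 0 ≤ c) (hs : 0 ≤ s) (hcs : c ^ 2 + s ^ 2 = 1)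
    (hxc : a * c + ρ * s = x * c) (hxs : ρ * c + b * s = x * s) :
    IsNonnegEigenpair (fromBlocks A (vecMulVec u (ρ • v)) (vecMulVec v (ρ • u)) B) x
      (Sum.elim (c • u) (s • v)) where
  isSymm := hA.isSymm.fromBlocks (by simp [transpose_vecMulVec]) hB.isSymm
  nonneg := by
    rintro (i | i) (j | j)
    · exact hA.nonneg i j
    · exact mul_nonneg (hA.vec_nonneg i) (mul_nonneg hρ (hB.vec_nonneg j))
    · exact mul_nonneg (hB.vec_nonneg i) (mul_nonneg hρ (hA.vec_nonneg j))
    · exact hB.nonneg i j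
  vec_nonneg := by
    rintro (i | i)
    · exact mul_nonneg hc (hA.vec_nonneg i)
    · exact mul_nonneg hs (hB.vec_nonneg i)
  dotProduct_self := by
    simpa [sumElim_dotProduct_sumElim, hA.dotProduct_self, hB.dotProduct_self, ← sq] using hcs
  mulVec_eq := by
    simp only [fromBlocks_mulVec, Sum.elim_comp_inl, Sum.elim_comp_inr, mulVec_smul,
      vecMulVec_smul, smul_mulVec, vecMulVec_mulVec, op_smul_eq_smul, hA.mulVec_eq, hB.mulVec_eq,
      hA.dotProduct_self, hB.dotProduct_self, one_smul]
    ext (i | i) <;>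
      simp only [Sum.elim_inl, Sum.elim_inr, Pi.add_apply, Pi.smul_apply, smul_eq_mul]
    · linear_combination u i * hxc
    · linear_combination v i * hxs

theorem exists_symm_two_by_two_nonneg_eigenvector {a b x y : ℝ} (hyb : y ≤ b) (hbx : b ≤ x)
    (htrace : a + b = x + y) :
    ∃ ρ c s : ℝ, 0 ≤ ρ ∧ 0 ≤ c ∧ 0 ≤ s ∧ c ^ 2 + s ^ 2 = 1 ∧
      a * c + ρ * s = x * c ∧ ρ * c + b * s = x * s ∧ a * b - ρ ^ 2 = x * y := by
  have hyx : y ≤ x := hyb.trans hbx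
  obtain ⟨α, β, hα, hβ, hαβ, rfl⟩ : b ∈ segment ℝ y x := segment_eq_Icc hyx ▸ ⟨hyb, hbx⟩
  -- `!![a, ρ; ρ, b]` is the matrix with orthonormal eigenvectors `(√α, √β)` for `x` and
  -- `(-√β, √α)` for `y`.
  have hcs : √α ^ 2 + √β ^ 2 = 1 := by rw [Real.sq_sqrt hα, Real.sq_sqrt hβ, hαβ]
  have hb : α • y + β • x = √α ^ 2 * y + √β ^ 2 * x := by
    rw [Real.sq_sqrt hα, Real.sq_sqrt hβ, smul_eq_mul, smul_eq_mul]
  have ha : a = √α ^ 2 * x + √β ^ 2 * y := by linear_combination htrace - hb - (x + y) * hcs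
  refine ⟨(x - y) * √α * √β, √α, √β, ?_, Real.sqrt_nonneg α, Real.sqrt_nonneg β, hcs, ?_, ?_, ?_⟩
  · have := sub_nonneg.2 hyx
    positivity
  · rw [ha]; linear_combination x * √α * hcs
  · rw [hb]; linear_combination x * √β * hcs
  · rw [ha, hb]; linear_combination x * y * (√α ^ 2 + √β ^ 2 + 1) * hcs

/-- Some nonnegative symmetric matrix has a nonnegative unit eigenvector for `a` and characteristic
polynomial `(X - a) p`, so that the roots of `p` are the remaining eigenvalues. The size of the
matrix is determined by the degree of `p`, so its index type is left unspecified. -/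
def IsNonnegRealizable (a : ℝ) (p : ℝ[X]) : Prop :=
  ∃ (V : Type) (_ : Fintype V) (_ : DecidableEq V) (A : Matrix V V ℝ) (u : V → ℝ),
    IsNonnegEigenpair A a u ∧ A.charpoly = (X - C a) * p

namespace IsNonnegRealizable

theorem one {a : ℝ} (ha : 0 ≤ a) : IsNonnegRealizable a 1 := by
  refine ⟨Unit, inferInstance, inferInstance, diagonal fun _ => a, fun _ => 1, ?_, ?_⟩
  · constructor <;> simp [ha, dotProduct]
  · simp [charpoly_diagonal]

theorem couple {a b x y : ℝ} {p q : ℝ[X]} (hp : IsNonnegRealizable a p)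
    (hq : IsNonnegRealizable b q) (hyb : y ≤ b) (hbx : b ≤ x) (htrace : a + b = x + y) :
    IsNonnegRealizable x ((X - C y) * p * q) := by
  obtain ⟨V, _, _, A, u, hA, hAp⟩ := hp
  obtain ⟨W, _, _, B, v, hB, hBq⟩ := hq
  obtain ⟨ρ, c, s, hρ, hc, hs, hcs, hxc, hxs, hdet⟩ :=
    exists_symm_two_by_two_nonneg_eigenvector hyb hbx htrace
  refine ⟨V ⊕ W, inferInstance, inferInstance, _, _,
    hA.fromBlocks_vecMulVec hB hρ hc hs hcs hxc hxs, ?_⟩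
  have hfactor : (X - C a) * (X - C b) - C (ρ ^ 2) = (X - C x) * (X - C y) := by
    have htraceC := congrArg C htrace
    have hdetC := congrArg C hdet
    simp only [map_add, map_sub, map_mul] at htraceC hdetC
    linear_combination hdetC - X * htraceC
  have h := charpoly_fromBlocks_vecMulVec_mul hA.mulVec_eq hB.mulVec_eq (ρ • u) (ρ • v)
  rw [smul_dotProduct, smul_dotProduct, hA.dotProduct_self, hB.dotProduct_self, smul_eq_mul,
    mul_one, ← sq, hfactor, hAp, hBq] at h
  refine mul_right_cancel₀ (mul_ne_zero (X_sub_C_ne_zero a) (X_sub_C_ne_zero b)) ?_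
  linear_combination h

theorem prod_of_nonpos {ι : Type*} {l : ι → ℝ} {K : Finset ι} (hneg : ∀ i ∈ K, l i ≤ 0) {a : ℝ}
    (ha : -∑ i ∈ K, l i ≤ a) : IsNonnegRealizable a (∏ i ∈ K, (X - C (l i))) := by
  classical
  induction K using Finset.induction_on generalizing a with
  | empty => simpa using one (by simpa using ha)
  | insert i K hi ih =>
    rw [Finset.forall_mem_insert] at hneg
    rw [Finset.sum_insert hi] at ha
    have ha_nonneg : 0 ≤ a := by linarith [Finset.sum_nonpos hneg.2]
    have hK : IsNonnegRealizable (a + l i) (∏ j ∈ K, (X - C (l j))) := ih hneg.2 (by linarith)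
    simpa [Finset.prod_insert hi] using hK.couple (one le_rfl) hneg.1 ha_nonneg (add_zero _)

theorem mul_prod_mul_prod {ι : Type*} {l : ι → ℝ} {K₁ K₂ : Finset ι} {x y : ℝ} (hyx : y ≤ x)
    (hneg₁ : ∀ i ∈ K₁, l i ≤ 0) (hneg₂ : ∀ i ∈ K₂, l i ≤ 0)
    (hK₁ : -∑ i ∈ K₁, l i ≤ x) (hK₂ : -∑ i ∈ K₂, l i ≤ x)
    (hsum : 0 ≤ x + y + ∑ i ∈ K₁, l i + ∑ i ∈ K₂, l i) :
    IsNonnegRealizable x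
      ((X - C y) * (∏ i ∈ K₁, (X - C (l i))) * ∏ i ∈ K₂, (X - C (l i))) := by
  set b := max y (-∑ i ∈ K₂, l i)
  have hb_le : b ≤ x + y + ∑ i ∈ K₁, l i := max_le (by linarith) (by linarith)
  exact (prod_of_nonpos hneg₁ (a := x + y - b) (by linarith)).couple
    (prod_of_nonpos hneg₂ (le_max_right y _)) (le_max_left y _) (max_le hyx hK₂) (by ring)

theorem exists_matrix {ι : Type*} [Fintype ι] [DecidableEq ι] {a : ℝ} {p : ℝ[X]}
    (h : IsNonnegRealizable a p) (hcard : ((X - C a) * p).natDegree = Fintype.card ι) :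
    ∃ A : Matrix ι ι ℝ, A.IsSymm ∧ (∀ i j, 0 ≤ A i j) ∧ A.charpoly = (X - C a) * p := by
  obtain ⟨V, _, _, A, u, hA, hAp⟩ := h
  have e : V ≃ ι := Fintype.equivOfCardEq (by rw [← hcard, ← hAp, charpoly_natDegree_eq_dim])
  exact ⟨reindex e e A, hA.isSymm.submatrix _, fun i j => hA.nonneg _ _,
    (charpoly_reindex e A).trans hAp⟩

end IsNonnegRealizable

theorem abs_le_of_nonpos_of_neg_sum_le {ι G : Type*} [AddCommGroup G] [LinearOrder G]
    [IsOrderedAddMonoid G] {l : ι → G} {K : Finset ι} {a : G} (hneg : ∀ i ∈ K, l i ≤ 0)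
    (ha : -∑ i ∈ K, l i ≤ a) {i : ι} (hi : i ∈ K) : |l i| ≤ a := by
  rw [abs_of_nonpos (hneg i hi)]
  have h := Finset.single_le_sum (f := fun j => -l j) (fun j hj => neg_nonneg.2 (hneg j hj)) hi
  rw [Finset.sum_neg_distrib] at h
  exact h.trans ha

theorem stmt_7_general {ι : Type*} [Fintype ι] [DecidableEq ι] (l : ι → ℝ) {i₁ i₂ : ι}
    (hne : i₁ ≠ i₂) (hle : l i₂ ≤ l i₁) (hsum : 0 ≤ ∑ i, l i) (K₁ K₂ : Finset ι)
    (hunion : K₁ ∪ K₂ = {i₁, i₂}ᶜ) (hdisj : Disjoint K₁ K₂) (hneg : ∀ i ∈ K₁ ∪ K₂, l i ≤ 0)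
    (hK₁ : -∑ i ∈ K₁, l i ≤ l i₁) (hK₂ : -∑ i ∈ K₂, l i ≤ l i₁) :
    ∃ A : Matrix ι ι ℝ, A.IsSymm ∧ (∀ i j, 0 ≤ A i j) ∧ A.charpoly = ∏ i, (X - C (l i)) ∧
      l i₁ ∈ spectrum ℝ A ∧ ∀ μ ∈ spectrum ℝ A, |μ| ≤ l i₁ := by
  rw [Finset.forall_mem_union] at hneg
  obtain ⟨hneg₁, hneg₂⟩ := hneg
  have hprod : ∏ i, (X - C (l i)) = (X - C (l i₁)) *
      ((X - C (l i₂)) * (∏ i ∈ K₁, (X - C (l i))) * ∏ i ∈ K₂, (X - C (l i))) := by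
    rw [← Finset.prod_mul_prod_compl {i₁, i₂}, ← hunion, Finset.prod_pair hne,
      Finset.prod_union hdisj]
    ring
  rw [← Finset.sum_add_sum_compl {i₁, i₂}, ← hunion, Finset.sum_pair hne,
    Finset.sum_union hdisj, ← add_assoc] at hsum
  obtain ⟨A, hA, hA_nonneg, hAcharpoly⟩ :=
    (IsNonnegRealizable.mul_prod_mul_prod hle hneg₁ hneg₂ hK₁ hK₂ hsum).exists_matrix (ι := ι)
      (by rw [← hprod, natDegree_finsetProd_X_sub_C_eq_card, Finset.card_univ])
  rw [← hprod] at hAcharpoly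
  refine ⟨A, hA, hA_nonneg, hAcharpoly, ?_⟩
  rw [spectrum_eq_range_of_charpoly_eq_prod hAcharpoly, Set.forall_mem_range]
  refine ⟨Set.mem_range_self i₁, fun i => ?_⟩
  have hsum₁ := Finset.sum_nonpos hneg₁
  have hsum₂ := Finset.sum_nonpos hneg₂
  have hi : i ∈ {i₁, i₂} ∪ (K₁ ∪ K₂) := by
    rw [hunion, Finset.union_compl]
    exact Finset.mem_univ i
  simp only [Finset.mem_union, Finset.mem_insert, Finset.mem_singleton] at hi
  rcases hi with (rfl | rfl) | hi | hi
  · exact (abs_of_nonneg (by linarith)).le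
  · exact abs_le.2 ⟨by linarith, hle⟩
  · exact abs_le_of_nonpos_of_neg_sum_le hneg₁ hK₁ hi
  · exact abs_le_of_nonpos_of_neg_sum_le hneg₂ hK₂ hi

theorem stmt_7 (n : ℕ) (hn : 4 ≤ n) (l : Fin n → ℝ)
    (h2 : 0 ≤ l ⟨1, by omega⟩)
    (hneg : ∀ i : Fin n, 2 ≤ (i : ℕ) → l i ≤ 0)
    (hmono : ∀ i j : Fin n, i ≤ j → l j ≤ l i)
    (hsum : 0 ≤ ∑ i, l i)
    (K₁ K₂ : Finset (Fin n))
    (hunion : K₁ ∪ K₂ = Finset.univ.filter (fun i : Fin n => 2 ≤ (i : ℕ)))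
    (hdisj : Disjoint K₁ K₂)
    (hK12 : -∑ i ∈ K₂, l i ≤ -∑ i ∈ K₁, l i)
    (hK1 : -∑ i ∈ K₁, l i ≤ l ⟨0, by omega⟩) :
    ∃ A : Matrix (Fin n) (Fin n) ℝ, A.IsSymm ∧ (∀ i j, 0 ≤ A i j) ∧
      A.charpoly = ∏ i, (X - C (l i)) ∧
      l ⟨0, by omega⟩ ∈ spectrum ℝ A ∧ ∀ μ ∈ spectrum ℝ A, |μ| ≤ l ⟨0, by omega⟩ := by
  have hcompl : Finset.univ.filter (fun i : Fin n => 2 ≤ (i : ℕ)) =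
      {⟨0, by omega⟩, ⟨1, by omega⟩}ᶜ := by
    ext i
    simp only [Finset.mem_filter_univ, Finset.mem_compl, Finset.mem_insert, Finset.mem_singleton,
      Fin.ext_iff]
    omega
  exact stmt_7_general l (by simp) (hmono _ _ (by simp)) hsum K₁ K₂ (hunion.trans hcompl) hdisj
    (fun i hi => hneg i (by simpa [hunion] using hi)) hK1 (hK12.trans hK1)
end

section
/- Let d ∈ [−1/2, 0], let k be a positive even integer, and let (x,y) lie in the triangle OBJ. Then 1 + d^k + (−d−1)^k ≤ s_k ≤ 1 + (2d+1)^k + 2(−d−1)^k, where s_k = 1 + x^k + y^k + (d−x−y)^k + (−d−1)^k. Moreover the lower bound is attained at (x,y) = (0,0) and the upper bound at (x,y) = (2d+1, 0). -/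
/-!
For even `k`, `t ↦ t ^ k` is a function of `|t|` that is monotone on `t ≥ 0`. On the triangle
`x, y ≥ 0`, `x + y ≤ m`, the term `|d - x - y|` is smallest at the origin (as `d ≤ 0`) and largest
on the edge `x + y = m` (as `2 * d ≤ m`). Superadditivity of `t ↦ t ^ k` on `t ≥ 0` bounds
`x ^ k + y ^ k` by `m ^ k`, with equality at the vertex `(m, 0)` of that same edge. The theorem is
the case `m = 2 * d + 1`.
-/

section OrderedRing

variable {R : Type*} [CommRing R] [LinearOrder R] [IsStrictOrderedRing R] {d m x y : R} {k : ℕ}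

theorem pow_le_pow_of_even_of_abs_le (hk : Even k) (h : |x| ≤ |y|) : x ^ k ≤ y ^ k := by
  rw [← hk.pow_abs x, ← hk.pow_abs y]
  exact pow_le_pow_left₀ (abs_nonneg x) h k

theorem pow_le_pow_add_pow_add_sub_sub_pow (hk : Even k) (hd : d ≤ 0) (hxy : 0 ≤ x + y) :
    d ^ k ≤ x ^ k + y ^ k + (d - x - y) ^ k := by
  have habs : |d| ≤ |d - x - y| := by
    rw [abs_of_nonpos hd, abs_of_nonpos (by linarith)]
    linarith
  calc d ^ k ≤ (d - x - y) ^ k := pow_le_pow_of_even_of_abs_le hk habs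
    _ ≤ x ^ k + y ^ k + (d - x - y) ^ k :=
      le_add_of_nonneg_left (add_nonneg (hk.pow_nonneg x) (hk.pow_nonneg y))

theorem pow_add_pow_add_sub_sub_pow_le (hk : Even k) (hk0 : k ≠ 0) (hx : 0 ≤ x) (hy : 0 ≤ y)
    (hxy : x + y ≤ m) (hdm : 2 * d ≤ m) :
    x ^ k + y ^ k + (d - x - y) ^ k ≤ m ^ k + (d - m) ^ k := by
  have habs : |d - x - y| ≤ |d - m| := by
    rw [abs_of_nonpos (by linarith : d - m ≤ 0), abs_le]
    constructor <;> linarith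
  have hsum : x ^ k + y ^ k ≤ m ^ k :=
    (pow_add_pow_le hx hy hk0).trans (pow_le_pow_left₀ (add_nonneg hx hy) hxy k)
  exact add_le_add hsum (pow_le_pow_of_even_of_abs_le hk habs)

theorem stmt_8_general (hk : Even k) (hk0 : k ≠ 0) (hd : d ≤ 0) (hx : 0 ≤ x) (hy : 0 ≤ y)
    (hxy : x + y ≤ 2 * d + 1) :
    (1 + d ^ k + (-d - 1) ^ k ≤ 1 + x ^ k + y ^ k + (d - x - y) ^ k + (-d - 1) ^ k ∧
      1 + x ^ k + y ^ k + (d - x - y) ^ k + (-d - 1) ^ k ≤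
        1 + (2 * d + 1) ^ k + 2 * (-d - 1) ^ k) ∧
    1 + (0 : R) ^ k + (0 : R) ^ k + (d - 0 - 0) ^ k + (-d - 1) ^ k =
      1 + d ^ k + (-d - 1) ^ k ∧
    1 + (2 * d + 1) ^ k + (0 : R) ^ k + (d - (2 * d + 1) - 0) ^ k + (-d - 1) ^ k =
      1 + (2 * d + 1) ^ k + 2 * (-d - 1) ^ k := by
  have hvertex : d - (2 * d + 1) = -d - 1 := by ring
  have lower := pow_le_pow_add_pow_add_sub_sub_pow hk hd (add_nonneg hx hy)
  have upper := pow_add_pow_add_sub_sub_pow_le hk hk0 hx hy hxy (by linarith : 2 * d ≤ 2 * d + 1)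
  rw [hvertex] at upper
  refine ⟨⟨by linarith, by linarith⟩, ?_, ?_⟩
  · simp only [zero_pow hk0, sub_zero, add_zero]
  · rw [sub_zero, hvertex, zero_pow hk0]
    ring

end OrderedRing

theorem stmt_8 (d : ℝ) (hd : d ∈ Set.Icc (-1/2 : ℝ) 0) (k : ℕ) (hk : 0 < k)
    (hke : Even k) (x y : ℝ) (hy0 : 0 ≤ y) (hyx : y ≤ x) (hxy : y ≤ -x + 2*d + 1) :
    (1 + d ^ k + (-d - 1) ^ k ≤ 1 + x ^ k + y ^ k + (d - x - y) ^ k + (-d - 1) ^ k ∧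
      1 + x ^ k + y ^ k + (d - x - y) ^ k + (-d - 1) ^ k ≤
        1 + (2*d + 1) ^ k + 2 * (-d - 1) ^ k) ∧
    1 + (0:ℝ) ^ k + (0:ℝ) ^ k + (d - 0 - 0) ^ k + (-d - 1) ^ k =
      1 + d ^ k + (-d - 1) ^ k ∧
    1 + (2*d + 1) ^ k + (0:ℝ) ^ k + (d - (2*d + 1) - 0) ^ k + (-d - 1) ^ k =
      1 + (2*d + 1) ^ k + 2 * (-d - 1) ^ k :=
  stmt_8_general hke hk.ne' hd.2 (hy0.trans hyx) hy0 (by linarith)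
end

section
/- Let d ∈ [−1/2, 0], let k be a positive odd integer, and let (x,y) lie in the triangle OBJ. Then 1 + 2(d + 1/2)^k + 2(−d−1)^k ≤ s_k ≤ 1 + d^k + (−d−1)^k, where s_k = 1 + x^k + y^k + (d−x−y)^k + (−d−1)^k. Moreover the lower bound is attained at (x,y) = (d+1/2, d+1/2) and the upper bound at (x,y) = (0,0). -/
/-!
Since `k` is odd, `(d - x - y) ^ k = -(x + y - d) ^ k`, so with `e = -d ≥ 0` only the expression
`x ^ k + y ^ k - (x + y + e) ^ k` has to be estimated. The upper bound `-e ^ k` is superadditivity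
of `t ↦ t ^ k` on `[0, ∞)`. The lower bound is convexity: for `m = d + 1/2` the triple
`(m, m, x + y + e)` is majorized by `(x, y, 2 * m + e)`, and three spreading moves
`f p + f q ≤ f a + f b` lead from the former to the latter.
-/

theorem convexOn_add_le_add_of_mem_segment {𝕜 E β : Type*} [Semiring 𝕜] [PartialOrder 𝕜]
    [AddCommGroup E] [Module 𝕜 E] [AddCommMonoid β] [PartialOrder β] [IsOrderedAddMonoid β]
    [Module 𝕜 β] {s : Set E} {f : E → β} (hf : ConvexOn 𝕜 s f) {a b p q : E}
    (ha : a ∈ s) (hb : b ∈ s) (hp : p ∈ segment 𝕜 a b) (hpq : p + q = a + b) :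
    f p + f q ≤ f a + f b := by
  obtain ⟨u, v, hu, hv, huv, rfl⟩ := hp
  have hq : q = v • a + u • b := by
    refine add_left_cancel (hpq.trans ?_)
    calc
      a + b = (u + v) • a + (u + v) • b := by rw [huv, one_smul, one_smul]
      _ = u • a + v • b + (v • a + u • b) := by rw [add_smul, add_smul]; abel
  calc
    f (u • a + v • b) + f q ≤ (u • f a + v • f b) + (v • f a + u • f b) := by
      rw [hq]
      exact add_le_add (hf.2 ha hb hu hv huv) (hf.2 ha hb hv hu (by rwa [add_comm]))
    _ = (u + v) • f a + (u + v) • f b := by rw [add_smul, add_smul]; abel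
    _ = f a + f b := by rw [huv, one_smul, one_smul]

theorem convexOn_two_mul_add_le_add_add {𝕜 : Type*} [Field 𝕜] [LinearOrder 𝕜]
    [IsStrictOrderedRing 𝕜] {f : 𝕜 → 𝕜} (hf : ConvexOn 𝕜 (Set.Ici 0) f) {x y m e : 𝕜}
    (hx : 0 ≤ x) (hy : 0 ≤ y) (he : 0 ≤ e) (hm : x + y ≤ 2 * m) :
    2 * f m + f (x + y + e) ≤ f x + f y + f (2 * m + e) := by
  obtain ⟨c, hc⟩ : ∃ c, x + y = 2 * c := ⟨(x + y) / 2, by ring⟩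
  have hc0 : 0 ≤ c := by linarith
  have hcm : c ≤ m := by linarith
  have spread {a b p q : 𝕜} (ha : 0 ≤ a) (hap : a ≤ p) (hpb : p ≤ b) (hpq : p + q = a + b) :
      f p + f q ≤ f a + f b :=
    convexOn_add_le_add_of_mem_segment hf ha (ha.trans (hap.trans hpb))
      (Icc_subset_segment ⟨hap, hpb⟩) hpq
  have hmid : f c + f c ≤ f x + f y := by
    have hc_mem : c ∈ segment 𝕜 x y :=
      ⟨1 / 2, 1 / 2, by positivity, by positivity, add_halves 1, by
        rw [← smul_add, hc, smul_eq_mul]; ring⟩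
    exact convexOn_add_le_add_of_mem_segment hf hx hy hc_mem (by rw [hc, two_mul])
  have hraise_first : f m + f (2 * c + e) ≤ f c + f (c + m + e) :=
    spread hc0 hcm (by linarith) (by ring)
  have hraise_second : f m + f (c + m + e) ≤ f c + f (2 * m + e) :=
    spread hc0 hcm (by linarith) (by ring)
  rw [hc]
  linarith

theorem pow_add_pow_add_pow_le {R : Type*} [Semiring R] [PartialOrder R] [IsOrderedRing R]
    {x y z : R} (hx : 0 ≤ x) (hy : 0 ≤ y) (hz : 0 ≤ z) {n : ℕ} (hn : n ≠ 0) :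
    x ^ n + y ^ n + z ^ n ≤ (x + y + z) ^ n :=
  (add_le_add_left (pow_add_pow_le hx hy hn) _).trans (pow_add_pow_le (add_nonneg hx hy) hz hn)

theorem stmt_9 (d : ℝ) (hd : d ∈ Set.Icc (-1/2 : ℝ) 0) (k : ℕ) (hk : 0 < k)
    (hko : Odd k) (x y : ℝ) (hy0 : 0 ≤ y) (hyx : y ≤ x) (hxy : y ≤ -x + 2*d + 1) :
    (1 + 2 * (d + 1/2) ^ k + 2 * (-d - 1) ^ k ≤
        1 + x ^ k + y ^ k + (d - x - y) ^ k + (-d - 1) ^ k ∧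
      1 + x ^ k + y ^ k + (d - x - y) ^ k + (-d - 1) ^ k ≤
        1 + d ^ k + (-d - 1) ^ k) ∧
    1 + (d + 1/2) ^ k + (d + 1/2) ^ k + (d - (d + 1/2) - (d + 1/2)) ^ k + (-d - 1) ^ k =
      1 + 2 * (d + 1/2) ^ k + 2 * (-d - 1) ^ k ∧
    1 + (0:ℝ) ^ k + (0:ℝ) ^ k + (d - 0 - 0) ^ k + (-d - 1) ^ k =
      1 + d ^ k + (-d - 1) ^ k := by
  have hx0 : 0 ≤ x := hy0.trans hyx
  have he : 0 ≤ -d := neg_nonneg.2 hd.2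
  have hsum : (x + y + -d) ^ k = -(d - x - y) ^ k := by rw [← hko.neg_pow]; ring
  refine ⟨⟨?lower, ?upper⟩, ?lower_attained, ?upper_attained⟩
  case lower =>
    have hmax : (2 * (d + 1/2) + -d) ^ k = -(-d - 1) ^ k := by rw [← hko.neg_pow]; ring
    have hconv := convexOn_two_mul_add_le_add_add (convexOn_pow k) hx0 hy0 he
      (show x + y ≤ 2 * (d + 1/2) by linarith)
    simp only [hsum, hmax] at hconv
    linarith
  case upper =>
    have hsuper := pow_add_pow_add_pow_le hx0 hy0 he hk.ne'
    rw [hsum, hko.neg_pow] at hsuper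
    linarith
  case lower_attained => ring
  case upper_attained => simp [hk.ne']
end

section
/- Let d ∈ [−1/2, −3/4 + (√5)/4] and let (x,y) lie in the triangle OBJ. Then s₃(x,y,d) ≥ 0. -/
/-!
For fixed `s = x + y ≥ 0` the sum `x ^ 3 + y ^ 3` is smallest at `x = y`, where it equals
`s ^ 3 / 4`. The resulting lower bound `1 + s ^ 3 / 4 + (d - s) ^ 3 + (-d - 1) ^ 3`
decreases in `s`, so it is smallest on the edge `s = 2 * d + 1`. There its
cubic terms in `d` cancel and it equals `-(3 / 4) * (4 * d ^ 2 + 6 * d + 1)`, whose larger root is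
`-3 / 4 + √5 / 4`.
-/

section OrderedRing

variable {R : Type*} [CommRing R] [LinearOrder R] [IsStrictOrderedRing R]

theorem add_cube_le_four_mul_cube_add_cube {x y : R} (h : 0 ≤ x + y) :
    (x + y) ^ 3 ≤ 4 * (x ^ 3 + y ^ 3) := by
  have hdiff : 4 * (x ^ 3 + y ^ 3) - (x + y) ^ 3 = 3 * ((x + y) * (x - y) ^ 2) := by ring
  rw [← sub_nonneg, hdiff]
  positivity

theorem antitoneOn_mul_cube_add_sub_cube {c d : R} (hc : c ≤ 1) (hd : d ≤ 0) :
    AntitoneOn (fun s ↦ c * s ^ 3 + (d - s) ^ 3) (Set.Ici 0) := by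
  rintro s (hs : 0 ≤ s) t - hst
  -- Apart from the constant term, every coefficient in `u` is nonpositive.
  have hexpand (u : R) : c * u ^ 3 + (d - u) ^ 3 =
      d ^ 3 - (3 * d ^ 2 * u + 3 * -d * u ^ 2 + (1 - c) * u ^ 3) := by ring
  have : 0 ≤ -d := neg_nonneg.mpr hd
  have : 0 ≤ 1 - c := sub_nonneg.mpr hc
  simp only [hexpand]
  gcongr

end OrderedRing

theorem four_mul_sq_add_six_mul_add_one_nonpos_iff {d : ℝ} :
    4 * d ^ 2 + 6 * d + 1 ≤ 0 ↔ d ∈ Set.Icc (-3 / 4 - √5 / 4) (-3 / 4 + √5 / 4) := by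
  calc 4 * d ^ 2 + 6 * d + 1 ≤ 0
      ↔ (4 * d + 3) ^ 2 ≤ 5 := by constructor <;> intro h <;> linarith
    _ ↔ -√5 ≤ 4 * d + 3 ∧ 4 * d + 3 ≤ √5 := Real.sq_le (by norm_num)
    _ ↔ d ∈ Set.Icc (-3 / 4 - √5 / 4) (-3 / 4 + √5 / 4) := by
      rw [Set.mem_Icc]
      constructor <;> rintro ⟨hl, hu⟩ <;> constructor <;> linarith

theorem stmt_10_general (d : ℝ) (hd : d ≤ -3 / 4 + √5 / 4)
    (x y : ℝ) (hxy0 : 0 ≤ x + y) (hxy : x + y ≤ 2 * d + 1) :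
    0 ≤ 1 + x ^ 3 + y ^ 3 + (d - x - y) ^ 3 + (-d - 1) ^ 3 := by
  have hquad : 4 * d ^ 2 + 6 * d + 1 ≤ 0 :=
    four_mul_sq_add_six_mul_add_one_nonpos_iff.mpr
      ⟨by linarith [Real.sqrt_nonneg 5], hd⟩
  have hd0 : d ≤ 0 := by linarith [sq_nonneg d]
  have hedge : 1 / 4 * (2 * d + 1) ^ 3 + (d - (2 * d + 1)) ^ 3 ≤
      1 / 4 * (x + y) ^ 3 + (d - (x + y)) ^ 3 :=
    antitoneOn_mul_cube_add_sub_cube (by norm_num) hd0 hxy0 (hxy0.trans hxy) hxy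
  calc 0 ≤ -(3 / 4) * (4 * d ^ 2 + 6 * d + 1) := by linarith
    _ = 1 + (1 / 4 * (2 * d + 1) ^ 3 + (d - (2 * d + 1)) ^ 3) + (-d - 1) ^ 3 := by ring
    _ ≤ 1 + (1 / 4 * (x + y) ^ 3 + (d - (x + y)) ^ 3) + (-d - 1) ^ 3 := by gcongr
    _ ≤ 1 + x ^ 3 + y ^ 3 + (d - x - y) ^ 3 + (-d - 1) ^ 3 := by
      rw [← sub_sub d x y]
      linarith [add_cube_le_four_mul_cube_add_cube hxy0]

theorem stmt_10 (d : ℝ) (hd : d ∈ Set.Icc (-1/2 : ℝ) (-3/4 + Real.sqrt 5 / 4))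
    (x y : ℝ) (hy0 : 0 ≤ y) (hyx : y ≤ x) (hxy : y ≤ -x + 2*d + 1) :
    0 ≤ 1 + x ^ 3 + y ^ 3 + (d - x - y) ^ 3 + (-d - 1) ^ 3 :=
  stmt_10_general d hd.2 x y (by linarith) (by linarith)
end

section
/- Let d ∈ [−1/2, 0) and let (x,y) lie in the triangle OBJ. Then the quantity under the square root in h(x) is nonnegative, h(x) ≥ 0, and s₃(x,y,d) ≥ 0 if and only if y ≤ h(x). -/
/-!
For fixed `x` and `d`, completing the square in `y` gives
`4 s₃(x, y, d) = 3 (N - (x - d) (2 y + (x - d))²)`, where `N` is the numerator under the root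
in `h(x)`. So for `d < x`, above the axis of symmetry `y = -(x - d) / 2`, the sign of
`s₃` is decided by comparing `y` with the larger root `h(x)`. At `y = 0` there is a factorization
`s₃(x, 0, d) = -3 d (1 + x) (1 + d - x)`, whose sign is visible; it shows that the radicand is at
least `(x - d)²`, that is, `h(x) ≥ 0`.
-/

section CommRing

variable {R : Type*} [CommRing R]

/-- The sum `s₃(x, y, d)` of the cubes of the five numbers `1, x, y, d - x - y, -d - 1`, which
add up to zero. -/
def cubeSum (x y d : R) : R := 1 + x ^ 3 + y ^ 3 + (d - x - y) ^ 3 + (-d - 1) ^ 3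

/-- The numerator under the square root in `h(x)`. Up to the factor `9 (x - d)` it is the
discriminant of `cubeSum x y d` as a quadratic polynomial in `y`. -/
def rootNumerator (x d : R) : R := x ^ 3 + d * x ^ 2 - d ^ 2 * x - 4 * d - 4 * d ^ 2 - d ^ 3

theorem four_mul_cubeSum (x y d : R) :
    4 * cubeSum x y d = 3 * (rootNumerator x d - (2 * y + (x - d)) ^ 2 * (x - d)) := by
  unfold cubeSum rootNumerator
  ring

theorem cubeSum_zero_right (x d : R) : cubeSum x 0 d = 3 * -d * (1 + x) * (1 + d - x) := by
  unfold cubeSum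
  ring

end CommRing

section LinearOrderedField

variable {K : Type*} [Field K] [LinearOrder K] [IsStrictOrderedRing K] {x y d : K}

theorem cubeSum_nonneg_iff_sq_le (hdx : d < x) :
    0 ≤ cubeSum x y d ↔ (2 * y + (x - d)) ^ 2 ≤ rootNumerator x d / (x - d) := by
  have h_square := four_mul_cubeSum x y d
  rw [le_div_iff₀ (sub_pos.2 hdx)]
  constructor <;> intro h <;> linarith

theorem cubeSum_zero_right_nonneg (hd : d ∈ Set.Icc (-1) 0) (hx : x ∈ Set.Icc d (d + 1)) :
    0 ≤ cubeSum x 0 d := by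
  obtain ⟨hd_ge, hd_le⟩ := hd
  obtain ⟨hdx, hx_le⟩ := hx
  have h_neg_d : 0 ≤ -d := by linarith
  have h_one_add : 0 ≤ 1 + x := by linarith
  have h_one_add_sub : 0 ≤ 1 + d - x := by linarith
  rw [cubeSum_zero_right]
  positivity

theorem sq_le_rootNumerator_div (hd : d ∈ Set.Icc (-1) 0) (hx : x ∈ Set.Ioc d (d + 1)) :
    (x - d) ^ 2 ≤ rootNumerator x d / (x - d) := by
  simpa only [mul_zero, zero_add] using
    (cubeSum_nonneg_iff_sq_le hx.1).1 (cubeSum_zero_right_nonneg hd (Set.Ioc_subset_Icc_self hx))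

end LinearOrderedField

section Real

/-- The function `h(x)`, for the parameter `d < x`: the larger root of `cubeSum x y d` as a
quadratic polynomial in `y`, provided that the radicand is nonnegative. -/
noncomputable def upperRoot (x d : ℝ) : ℝ :=
  -(x - d) / 2 + √(rootNumerator x d / (x - d)) / 2

variable {x y d : ℝ}

theorem le_upperRoot_iff :
    y ≤ upperRoot x d ↔ 2 * y + (x - d) ≤ √(rootNumerator x d / (x - d)) := by
  unfold upperRoot
  constructor <;> intro h <;> linarith

theorem cubeSum_nonneg_iff_le_upperRoot (hdx : d < x) (hR : 0 ≤ rootNumerator x d / (x - d))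
    (hy : 0 ≤ 2 * y + (x - d)) : 0 ≤ cubeSum x y d ↔ y ≤ upperRoot x d := by
  rw [cubeSum_nonneg_iff_sq_le hdx, le_upperRoot_iff, Real.le_sqrt hy hR]

theorem stmt_11_general (hd : d ∈ Set.Icc (-1) 0) (hx : x ∈ Set.Ioc d (d + 1))
    (hy : 0 ≤ 2 * y + (x - d)) :
    0 ≤ rootNumerator x d / (x - d) ∧ 0 ≤ upperRoot x d ∧
      (0 ≤ cubeSum x y d ↔ y ≤ upperRoot x d) := by
  have h_sq_le := sq_le_rootNumerator_div hd hx
  have h_nonneg := (sq_nonneg _).trans h_sq_le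
  refine ⟨h_nonneg, ?_, cubeSum_nonneg_iff_le_upperRoot hx.1 h_nonneg hy⟩
  rw [le_upperRoot_iff, mul_zero, zero_add]
  exact Real.le_sqrt_of_sq_le h_sq_le

end Real

theorem stmt_11 (d : ℝ) (hd : d ∈ Set.Ico (-1/2 : ℝ) 0) (x y : ℝ)
    (hy0 : 0 ≤ y) (hyx : y ≤ x) (hxy : y ≤ -x + 2*d + 1) :
    0 ≤ (x^3 + d*x^2 - d^2*x - 4*d - 4*d^2 - d^3) / (x - d) ∧
    0 ≤ -(x - d)/2 + Real.sqrt ((x^3 + d*x^2 - d^2*x - 4*d - 4*d^2 - d^3) / (x - d)) / 2 ∧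
    (0 ≤ 1 + x^3 + y^3 + (d - x - y)^3 + (-d - 1)^3 ↔
      y ≤ -(x - d)/2 +
        Real.sqrt ((x^3 + d*x^2 - d^2*x - 4*d - 4*d^2 - d^3) / (x - d)) / 2) := by
  have hdx : d < x := hd.2.trans_le (hy0.trans hyx)
  exact stmt_11_general ⟨by linarith [hd.1], hd.2.le⟩ ⟨hdx, by linarith [hd.2]⟩ (by linarith [hdx])
end

section
/- Let d ∈ [−3/4 + (√5)/4, 0). Then the cubic polynomial h₄(x) = 8x³ − 16dx² + 8d²x + 4d + 4d² has exactly one real root, and this root lies in the interval (0, d + 1/2]; moreover, for every x ∈ [0, 2d+1], one has h(x) ≤ x if and only if h₄(x) ≥ 0. -/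
/-!
For `d < x` the number `h(x)` is the larger root `y` of the quadratic equation
`(x - d) (y - d) (x + y) = -d (1 + d)`, and `h₄(x) / 4 = 2 x (x - d)² + d (1 + d)` is the difference
of its two sides at `y = x`. Past the larger root this difference is nonnegative; conversely
`h₄(x) ≥ 0` forces `x > 0`, which is to the right of the vertex `-(x - d) / 2`, so that `h(x) ≤ x`.

For `-1 < d < 0` the term `d (1 + d)` is negative while `2 x (x - d)²` is nonpositive for `x ≤ 0`
and strictly increasing for `x ≥ 0`, so `h₄` has one real root `r`, and `h₄(x) ≥ 0` exactly when
`r ≤ x`. At `x = d + 1/2` this reads `4 d² + 6 d + 1 ≥ 0`, which is where the bound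
`-3/4 + √5/4 ≤ d` comes from.
-/

open Set

/-- The expression under the square root in `h(x)`. -/
noncomputable def branchRadicand (d x : ℝ) : ℝ :=
  (x ^ 3 + d * x ^ 2 - d ^ 2 * x - 4 * d - 4 * d ^ 2 - d ^ 3) / (x - d)

/-- The function `h` of the paper, for the parameter `d`; it is meaningful for `d < x`. -/
noncomputable def branch (d x : ℝ) : ℝ :=
  -(x - d) / 2 + √(branchRadicand d x) / 2

/-- The cubic polynomial `h₄` of the paper, which decides whether `branch d x` lies below the
diagonal. -/
def diagCubic (d x : ℝ) : ℝ :=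
  8 * x ^ 3 - 16 * d * x ^ 2 + 8 * d ^ 2 * x + 4 * d + 4 * d ^ 2

section

variable {d x r : ℝ}

theorem diagCubic_eq (d x : ℝ) : diagCubic d x = 8 * (x * (x - d) ^ 2) + 4 * (d * (1 + d)) := by
  unfold diagCubic
  ring

theorem continuous_diagCubic (d : ℝ) : Continuous (diagCubic d) := by
  unfold diagCubic
  fun_prop

theorem strictMonoOn_diagCubic (hd : d ≤ 0) : StrictMonoOn (diagCubic d) (Ici 0) := by
  intro x (hx : 0 ≤ x) y _ hxy
  have hsq : (x - d) ^ 2 < (y - d) ^ 2 :=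
    pow_lt_pow_left₀ (by linarith) (by linarith) two_ne_zero
  have hmul : x * (x - d) ^ 2 < y * (y - d) ^ 2 := mul_lt_mul'' hxy hsq hx (sq_nonneg _)
  rw [diagCubic_eq, diagCubic_eq]
  linarith

theorem mul_one_add_neg_of_mem_Ioo (hd : d ∈ Ioo (-1) 0) : d * (1 + d) < 0 :=
  mul_neg_of_neg_of_pos hd.2 (by linarith [hd.1])

theorem pos_of_diagCubic_nonneg (hd : d ∈ Ioo (-1) 0) (h : 0 ≤ diagCubic d x) : 0 < x := by
  rw [diagCubic_eq] at h
  have hmul : 0 < x * (x - d) ^ 2 := by linarith [mul_one_add_neg_of_mem_Ioo hd]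
  exact pos_of_mul_pos_left hmul (sq_nonneg _)

theorem exists_diagCubic_eq_zero (hd : d ∈ Ioo (-1) 0) : ∃ r, diagCubic d r = 0 := by
  have h_zero : diagCubic d 0 ≤ 0 := by
    rw [diagCubic_eq]
    linarith [mul_one_add_neg_of_mem_Ioo hd]
  have h_one : 0 ≤ diagCubic d 1 := by
    unfold diagCubic
    nlinarith [hd.2]
  exact mem_range_of_exists_le_of_exists_ge (continuous_diagCubic d) ⟨0, h_zero⟩ ⟨1, h_one⟩

theorem diagCubic_nonneg_iff_root_le (hd : d ∈ Ioo (-1) 0) (hr : diagCubic d r = 0) :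
    0 ≤ diagCubic d x ↔ r ≤ x := by
  have hr_pos : 0 < r := pos_of_diagCubic_nonneg hd hr.ge
  have hmono := strictMonoOn_diagCubic hd.2.le
  constructor
  · intro h
    have hx_pos : 0 < x := pos_of_diagCubic_nonneg hd h
    exact (hmono.le_iff_le hr_pos.le hx_pos.le).mp (hr.trans_le h)
  · intro h
    exact hr.ge.trans ((hmono.le_iff_le hr_pos.le (hr_pos.le.trans h)).mpr h)

theorem diagCubic_root_unique {s : ℝ} (hd : d ∈ Ioo (-1) 0) (hr : diagCubic d r = 0)
    (hs : diagCubic d s = 0) : s = r :=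
  le_antisymm ((diagCubic_nonneg_iff_root_le hd hs).mp hr.ge)
    ((diagCubic_nonneg_iff_root_le hd hr).mp hs.ge)

theorem diagCubic_add_half_nonneg_iff (hd : -1 < d) :
    0 ≤ diagCubic d (d + 1 / 2) ↔ -3 / 4 + √5 / 4 ≤ d := by
  have h_square : 4 * diagCubic d (d + 1 / 2) = (4 * d + 3) ^ 2 - 5 := by
    unfold diagCubic
    ring
  have h_sqrt : -3 / 4 + √5 / 4 ≤ d ↔ √5 ≤ 4 * d + 3 := by
    constructor <;> intro h <;> linarith
  rw [h_sqrt, Real.sqrt_le_iff]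
  constructor
  · intro h
    exact ⟨by nlinarith, by linarith⟩
  · rintro ⟨-, h⟩
    linarith

theorem branchRadicand_eq (hx : x ≠ d) :
    branchRadicand d x = (x + d) ^ 2 - 4 * (d * (1 + d)) / (x - d) := by
  have hxd : x - d ≠ 0 := sub_ne_zero.mpr hx
  unfold branchRadicand
  field_simp
  ring

theorem branchRadicand_pos (hd : d ∈ Ioo (-1) 0) (hx : d < x) : 0 < branchRadicand d x := by
  have hquot : 4 * (d * (1 + d)) / (x - d) < 0 :=
    div_neg_of_neg_of_pos (by linarith [mul_one_add_neg_of_mem_Ioo hd]) (sub_pos.mpr hx)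
  rw [branchRadicand_eq hx.ne']
  linarith [sq_nonneg (x + d)]

theorem sq_sub_branchRadicand (hx : x ≠ d) :
    (3 * x - d) ^ 2 - branchRadicand d x = diagCubic d x / (x - d) := by
  have hxd : x - d ≠ 0 := sub_ne_zero.mpr hx
  rw [branchRadicand_eq hx, diagCubic_eq]
  field_simp
  ring

theorem branchRadicand_le_sq_iff (hx : d < x) :
    branchRadicand d x ≤ (3 * x - d) ^ 2 ↔ 0 ≤ diagCubic d x := by
  rw [← sub_nonneg, sq_sub_branchRadicand hx.ne', le_div_iff₀ (sub_pos.mpr hx), zero_mul]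

theorem branch_le_self_iff (hd : d ∈ Ioo (-1) 0) (hx : d < x) :
    branch d x ≤ x ↔ 0 ≤ diagCubic d x := by
  have h_sqrt : branch d x ≤ x ↔ √(branchRadicand d x) ≤ 3 * x - d := by
    unfold branch
    constructor <;> intro h <;> linarith
  rw [h_sqrt, Real.sqrt_le_iff, branchRadicand_le_sq_iff hx]
  refine and_iff_right_of_imp fun h ↦ ?_
  linarith [pos_of_diagCubic_nonneg hd h, hd.2]

theorem stmt_14_general (hd : d ∈ Ioo (-1) 0) :
    (∃ r, diagCubic d r = 0 ∧ 0 < r ∧ (r ≤ d + 1 / 2 ↔ -3 / 4 + √5 / 4 ≤ d) ∧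
      ∀ s, diagCubic d s = 0 → s = r) ∧
    ∀ x, d < x → 0 < branchRadicand d x ∧ (branch d x ≤ x ↔ 0 ≤ diagCubic d x) := by
  obtain ⟨r, hr⟩ := exists_diagCubic_eq_zero hd
  have hr_le : r ≤ d + 1 / 2 ↔ -3 / 4 + √5 / 4 ≤ d :=
    (diagCubic_nonneg_iff_root_le hd hr).symm.trans (diagCubic_add_half_nonneg_iff hd.1)
  exact ⟨⟨r, hr, pos_of_diagCubic_nonneg hd hr.ge, hr_le, fun _ ↦ diagCubic_root_unique hd hr⟩,
    fun x hx ↦ ⟨branchRadicand_pos hd hx, branch_le_self_iff hd hx⟩⟩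

end

theorem stmt_14 (d : ℝ) (hd : d ∈ Set.Ico (-3/4 + Real.sqrt 5 / 4) (0:ℝ)) :
    (∃ r : ℝ, (8*r^3 - 16*d*r^2 + 8*d^2*r + 4*d + 4*d^2 = 0) ∧
      0 < r ∧ r ≤ d + 1/2 ∧
      ∀ s : ℝ, 8*s^3 - 16*d*s^2 + 8*d^2*s + 4*d + 4*d^2 = 0 → s = r) ∧
    ∀ x ∈ Set.Icc (0:ℝ) (2*d + 1),
      (-(x - d)/2 + Real.sqrt ((x^3 + d*x^2 - d^2*x - 4*d - 4*d^2 - d^3) / (x - d)) / 2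
          ≤ x ↔ 0 ≤ 8*x^3 - 16*d*x^2 + 8*d^2*x + 4*d + 4*d^2) := by
  have hd_gt : -1 < d := by linarith [hd.1, Real.sqrt_nonneg 5]
  obtain ⟨⟨r, hr, hr_pos, hr_le, hr_unique⟩, h_iff⟩ := stmt_14_general ⟨hd_gt, hd.2⟩
  exact ⟨⟨r, hr, hr_pos, hr_le.mpr hd.1, hr_unique⟩, fun x hx ↦ (h_iff x (hd.2.trans_le hx.1)).2⟩
end

section
/- Let d ∈ [−3/4 + (√5)/4, 0). Then 4d² + 6d + 1 ≥ 0, so g(d) = √((4d² + 6d + 1)/(4(2d+1))) is real; moreover the roots p₁(d) = d + 1/2 + g(d) and p₂(d) = d + 1/2 − g(d) of the quadratic −4(2d+1)x² + 4(2d+1)²x − 8d²(d+1) satisfy p₂(d) ≤ d + 1/2 ≤ p₁(d) ≤ 2d + 1, and h(p₁(d)) = −p₁(d) + 2d + 1 = d + 1/2 − g(d). -/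
/-!
For `x > d`, the number `h(x)` is the larger root `y` of the quadratic equation
`(x - d) * y * (y + x - d) = d * (x + 1) * (x - 1 - d)`. Substituting `y = 2d + 1 - x` turns this
equation into the quadratic whose roots are `p₁` and `p₂`, so these are the abscissae at which the
line `x + y = 2d + 1` meets the curve. The quadratic is symmetric about `d + 1/2` and has the
nonpositive value `-8d²(d + 1)` at both `0` and `2d + 1`, so its roots lie between these two points;
this places `(p₁, 2d + 1 - p₁)` on the branch of the larger root.
-/

/-- The function `h` of the parameter `d` and the variable `x`. It is meaningful where `d < x`
and the radicand is nonnegative; elsewhere the total division and square root return junk values. -/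
noncomputable def upperBranch (d x : ℝ) : ℝ :=
  -(x - d) / 2 +
    Real.sqrt ((x ^ 3 + d * x ^ 2 - d ^ 2 * x - 4 * d - 4 * d ^ 2 - d ^ 3) / (x - d)) / 2

/-- The quadratic polynomial in `x` whose roots are `p₁(d)` and `p₂(d)`. -/
def crossingQuadratic (d x : ℝ) : ℝ :=
  -4 * (2 * d + 1) * x ^ 2 + 4 * (2 * d + 1) ^ 2 * x - 8 * d ^ 2 * (d + 1)

/-- The distance `g(d)` from the midpoint `d + 1/2` of the roots of `crossingQuadratic d` to
either root. -/
noncomputable def rootOffset (d : ℝ) : ℝ :=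
  Real.sqrt ((4 * d ^ 2 + 6 * d + 1) / (4 * (2 * d + 1)))

section Curve

variable {d x y : ℝ}

theorem upperBranch_eq_of_mem_curve (hdx : d < x)
    (hcurve : (x - d) * y * (y + x - d) = d * (x + 1) * (x - 1 - d))
    (hy : 0 ≤ 2 * y + x - d) : upperBranch d x = y := by
  have radicand_eq :
      (x ^ 3 + d * x ^ 2 - d ^ 2 * x - 4 * d - 4 * d ^ 2 - d ^ 3) / (x - d) =
        (2 * y + x - d) ^ 2 := by
    rw [div_eq_iff (sub_pos.mpr hdx).ne']
    linear_combination -4 * hcurve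
  rw [upperBranch, radicand_eq, Real.sqrt_sq hy]
  ring

theorem upperBranch_eq_of_crossingQuadratic_eq_zero (hdx : d < x) (hx : x ≤ 3 * d + 2)
    (hroot : crossingQuadratic d x = 0) : upperBranch d x = -x + 2 * d + 1 := by
  apply upperBranch_eq_of_mem_curve hdx
  · rw [crossingQuadratic] at hroot
    linear_combination hroot / 4
  · linarith

end Curve

section Roots

variable {d : ℝ}

theorem crossingQuadratic_midpoint_add (d t : ℝ) :
    crossingQuadratic d (d + 1 / 2 + t) = 4 * d ^ 2 + 6 * d + 1 - 4 * (2 * d + 1) * t ^ 2 := by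
  rw [crossingQuadratic]
  ring

theorem rootOffset_nonneg (d : ℝ) : 0 ≤ rootOffset d :=
  Real.sqrt_nonneg _

theorem mul_rootOffset_sq (hpos : 0 < 2 * d + 1) (hnonneg : 0 ≤ 4 * d ^ 2 + 6 * d + 1) :
    4 * (2 * d + 1) * rootOffset d ^ 2 = 4 * d ^ 2 + 6 * d + 1 := by
  rw [rootOffset, Real.sq_sqrt (by positivity)]
  exact mul_div_cancel₀ _ (by positivity)

theorem crossingQuadratic_midpoint_add_rootOffset (hpos : 0 < 2 * d + 1)
    (hnonneg : 0 ≤ 4 * d ^ 2 + 6 * d + 1) : crossingQuadratic d (d + 1 / 2 + rootOffset d) = 0 := by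
  rw [crossingQuadratic_midpoint_add, mul_rootOffset_sq hpos hnonneg, sub_self]

theorem crossingQuadratic_midpoint_sub_rootOffset (hpos : 0 < 2 * d + 1)
    (hnonneg : 0 ≤ 4 * d ^ 2 + 6 * d + 1) : crossingQuadratic d (d + 1 / 2 - rootOffset d) = 0 := by
  rw [sub_eq_add_neg, crossingQuadratic_midpoint_add, neg_sq, mul_rootOffset_sq hpos hnonneg,
    sub_self]

theorem rootOffset_le_midpoint (hpos : 0 < 2 * d + 1) : rootOffset d ≤ d + 1 / 2 := by
  have value_at_endpoint :
      crossingQuadratic d (d + 1 / 2 + (d + 1 / 2)) = -(8 * d ^ 2 * (d + 1)) := by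
    rw [crossingQuadratic]
    ring
  have endpoint_nonneg : 0 ≤ 8 * d ^ 2 * (d + 1) := mul_nonneg (by positivity) (by linarith)
  rw [crossingQuadratic_midpoint_add] at value_at_endpoint
  refine Real.sqrt_le_iff.mpr ⟨by linarith, ?_⟩
  rw [div_le_iff₀ (by positivity)]
  linarith

theorem upperBranch_midpoint_add_rootOffset (hpos : 0 < 2 * d + 1)
    (hnonneg : 0 ≤ 4 * d ^ 2 + 6 * d + 1) :
    upperBranch d (d + 1 / 2 + rootOffset d) = -(d + 1 / 2 + rootOffset d) + 2 * d + 1 := by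
  have offset_nonneg := rootOffset_nonneg d
  have offset_le := rootOffset_le_midpoint hpos
  exact upperBranch_eq_of_crossingQuadratic_eq_zero (by linarith) (by linarith)
    (crossingQuadratic_midpoint_add_rootOffset hpos hnonneg)

end Roots

section Threshold

variable {d : ℝ}

theorem two_mul_add_one_pos_of_threshold_le (hd : -3 / 4 + Real.sqrt 5 / 4 ≤ d) :
    0 < 2 * d + 1 := by
  have two_lt_sqrt_five : 2 < Real.sqrt 5 := Real.lt_sqrt_of_sq_lt (by norm_num)
  linarith

theorem quadratic_nonneg_of_threshold_le (hd : -3 / 4 + Real.sqrt 5 / 4 ≤ d) :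
    0 ≤ 4 * d ^ 2 + 6 * d + 1 := by
  have sqrt_five_nonneg : 0 ≤ Real.sqrt 5 := Real.sqrt_nonneg 5
  have sqrt_five_sq : Real.sqrt 5 ^ 2 = 5 := Real.sq_sqrt (by norm_num)
  calc 0 ≤ 4 * ((d + 3 / 4 - Real.sqrt 5 / 4) * (d + 3 / 4 + Real.sqrt 5 / 4)) :=
        mul_nonneg (by norm_num) (mul_nonneg (by linarith) (by linarith))
    _ = 4 * d ^ 2 + 6 * d + 1 := by linear_combination -sqrt_five_sq / 4

end Threshold

theorem stmt_16_general (d : ℝ) (hd : -3 / 4 + Real.sqrt 5 / 4 ≤ d) :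
    0 ≤ 4 * d ^ 2 + 6 * d + 1 ∧
    (let g := rootOffset d;
     let p₁ := d + 1 / 2 + g;
     let p₂ := d + 1 / 2 - g;
     crossingQuadratic d p₁ = 0 ∧
     crossingQuadratic d p₂ = 0 ∧
     p₂ ≤ d + 1 / 2 ∧ d + 1 / 2 ≤ p₁ ∧ p₁ ≤ 2 * d + 1 ∧
     upperBranch d p₁ = -p₁ + 2 * d + 1 ∧
     -p₁ + 2 * d + 1 = d + 1 / 2 - g) := by
  have hpos := two_mul_add_one_pos_of_threshold_le hd
  have hnonneg := quadratic_nonneg_of_threshold_le hd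
  have offset_nonneg := rootOffset_nonneg d
  have offset_le := rootOffset_le_midpoint hpos
  exact ⟨hnonneg, crossingQuadratic_midpoint_add_rootOffset hpos hnonneg,
    crossingQuadratic_midpoint_sub_rootOffset hpos hnonneg,
    by linarith, by linarith, by linarith,
    upperBranch_midpoint_add_rootOffset hpos hnonneg, by ring⟩

theorem stmt_16 (d : ℝ) (hd : d ∈ Set.Ico (-3/4 + Real.sqrt 5 / 4) (0:ℝ)) :
    0 ≤ 4*d^2 + 6*d + 1 ∧
    (let g := Real.sqrt ((4*d^2 + 6*d + 1) / (4*(2*d + 1)));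
     let p₁ := d + 1/2 + g;
     let p₂ := d + 1/2 - g;
     -4*(2*d + 1)*p₁^2 + 4*(2*d + 1)^2*p₁ - 8*d^2*(d + 1) = 0 ∧
     -4*(2*d + 1)*p₂^2 + 4*(2*d + 1)^2*p₂ - 8*d^2*(d + 1) = 0 ∧
     p₂ ≤ d + 1/2 ∧ d + 1/2 ≤ p₁ ∧ p₁ ≤ 2*d + 1 ∧
     -(p₁ - d)/2 +
         Real.sqrt ((p₁^3 + d*p₁^2 - d^2*p₁ - 4*d - 4*d^2 - d^3) / (p₁ - d)) / 2 =
       -p₁ + 2*d + 1 ∧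
     -p₁ + 2*d + 1 = d + 1/2 - g) :=
  stmt_16_general d hd.1
end

section
/- Let d ∈ [−1/2, 0] and x ∈ [0, 2d+1]. Set f₁ = √((x+1)(d+1−x)/2) and g₁ = √(x(x−d)) (both square roots are of nonnegative quantities in this range), and let A(x) be the 5×5 real symmetric matrix with rows (0, 0, f₁, 0, f₁), (0, 0, 0, 0, g₁), (f₁, 0, 0, g₁, −d), (0, 0, g₁, 0, 0), (f₁, g₁, −d, 0, 0). Then every entry of A(x) is nonnegative, and the characteristic polynomial of A(x) equals t(t−1)(t−x)(t−(d−x))(t+d+1); in particular the eigenvalues of A(x), with multiplicity, are 1, x, 0, d−x, −d−1. -/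
open Polynomial Matrix

/-!
The matrix commutes with the permutation exchanging the coordinate pairs `(1, 2)` and `(3, 4)`, so
the vectors fixed by this permutation form an invariant subspace. It is the graph of a linear map
from the first three coordinates to the last two, and shearing along this map makes the matrix block
triangular. The diagonal blocks have characteristic polynomials `t (t² + d t - (2 f₁² + g₁²))` and
`t² - d t - g₁²`. Since `2 f₁² + g₁² = d + 1` and `g₁² = x (x - d)`, their roots are `0`, `1`,
`-d - 1` and `x`, `d - x` respectively.
-/

/-- `hL` says that the graph of `L` is invariant under the block matrix; the two factors belong to
its restriction to the graph and to the induced map on the quotient. -/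
theorem charpoly_fromBlocks_of_graph_invariant {R m n : Type*} [CommRing R]
    [Fintype m] [Fintype n] [DecidableEq m] [DecidableEq n]
    (P : Matrix m m R) (Q : Matrix m n R) (S : Matrix n m R) (T : Matrix n n R)
    (L : Matrix n m R) (hL : S + T * L = L * (P + Q * L)) :
    (fromBlocks P Q S T).charpoly = (P + Q * L).charpoly * (T - L * Q).charpoly := by
  have shear_mul_inv :
      fromBlocks 1 0 L 1 * fromBlocks 1 0 (-L) 1 = (1 : Matrix (m ⊕ n) (m ⊕ n) R) := by
    simp [fromBlocks_multiply]
  have shear_intertwines : fromBlocks P Q S T * fromBlocks 1 0 L 1 =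
      fromBlocks 1 0 L 1 * fromBlocks (P + Q * L) Q 0 (T - L * Q) := by
    simp [fromBlocks_multiply, hL]
  calc (fromBlocks P Q S T).charpoly
      = (fromBlocks P Q S T * fromBlocks 1 0 L 1 * fromBlocks 1 0 (-L) 1).charpoly := by
        rw [Matrix.mul_assoc, shear_mul_inv, Matrix.mul_one]
    _ = (fromBlocks (P + Q * L) Q 0 (T - L * Q)).charpoly := by
        rw [Matrix.charpoly_mul_comm, shear_intertwines, ← Matrix.mul_assoc,
          mul_eq_one_comm.mp shear_mul_inv, Matrix.one_mul]
    _ = (P + Q * L).charpoly * (T - L * Q).charpoly := charpoly_fromBlocks_zero₂₁ ..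

section SwapInvariant

variable {R : Type*}

/-- The symmetric matrix of the theorem with free entries, `A(x)` being the case `f = f₁`, `g = g₁`,
`h = -d`. It is invariant under simultaneously exchanging the indices `1 ↔ 3` and `2 ↔ 4`. -/
def swapInvariantMatrix [Zero R] (f g h : R) : Matrix (Fin 5) (Fin 5) R :=
  !![0, 0, f, 0, f;
     0, 0, 0, 0, g;
     f, 0, 0, g, h;
     0, 0, g, 0, 0;
     f, g, h, 0, 0]

theorem swapInvariantMatrix_nonneg [Zero R] [Preorder R] {f g h : R}
    (hf : 0 ≤ f) (hg : 0 ≤ g) (hh : 0 ≤ h) (i j : Fin 5) :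
    0 ≤ swapInvariantMatrix f g h i j := by
  fin_cases i <;> fin_cases j <;> simp [swapInvariantMatrix, hf, hg, hh]

theorem swapInvariantMatrix_eq_reindex_fromBlocks [Zero R] (f g h : R) :
    swapInvariantMatrix f g h = reindex (finSumFinEquiv (m := 3) (n := 2)) finSumFinEquiv
      (fromBlocks !![0, 0, f; 0, 0, 0; f, 0, 0] !![0, f; 0, g; g, h]
        !![0, 0, g; f, g, h] 0) := by
  ext i j
  fin_cases i <;> fin_cases j <;> rfl

variable [CommRing R]

theorem charpoly_swapInvariantMatrix_eq_mul_charpoly (f g h : R) :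
    (swapInvariantMatrix f g h).charpoly =
      !![0, 0, 2 * f; 0, 0, g; f, g, h].charpoly * !![0, -g; -g, -h].charpoly := by
  -- The graph of `L` consists of the vectors fixed by the exchange of indices.
  let L : Matrix (Fin 2) (Fin 3) R := !![0, 1, 0; 0, 0, 1]
  have restriction_to_graph :
      !![0, 0, f; 0, 0, 0; f, 0, 0] + !![0, f; 0, g; g, h] * L =
        !![0, 0, 2 * f; 0, 0, g; f, g, h] := by
    simp [L, two_mul]
  have induced_on_quotient : 0 - L * !![0, f; 0, g; g, h] = !![0, -g; -g, -h] := by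
    simp [L]
  have graph_invariant : !![0, 0, g; f, g, h] + (0 : Matrix (Fin 2) (Fin 2) R) * L =
      L * (!![0, 0, f; 0, 0, 0; f, 0, 0] + !![0, f; 0, g; g, h] * L) := by
    simp [L]
  rw [swapInvariantMatrix_eq_reindex_fromBlocks, charpoly_reindex,
    charpoly_fromBlocks_of_graph_invariant _ _ _ _ L graph_invariant,
    restriction_to_graph, induced_on_quotient]

theorem charpoly_swapInvariantMatrix (f g h : R) :
    (swapInvariantMatrix f g h).charpoly =
      X * (X ^ 2 - C h * X - C (2 * f ^ 2 + g ^ 2)) * (X ^ 2 + C h * X - C (g ^ 2)) := by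
  nontriviality R
  have charpoly_restriction : !![0, 0, 2 * f; 0, 0, g; f, g, h].charpoly =
      X * (X ^ 2 - C h * X - C (2 * f ^ 2 + g ^ 2)) := by
    have charmatrix_restriction : !![0, 0, 2 * f; 0, 0, g; f, g, h].charmatrix =
        !![X, 0, -C (2 * f); 0, X, -C g; -C f, -C g, X - C h] := by
      ext1 i j
      fin_cases i <;> fin_cases j <;> simp
    rw [Matrix.charpoly, charmatrix_restriction, det_fin_three]
    simp only [of_apply, cons_val, map_add, map_mul, map_pow]
    ring
  have charpoly_quotient : !![0, -g; -g, -h].charpoly = X ^ 2 + C h * X - C (g ^ 2) := by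
    simp [charpoly_fin_two, trace_fin_two, det_fin_two, sub_eq_add_neg, sq]
  rw [charpoly_swapInvariantMatrix_eq_mul_charpoly, charpoly_restriction, charpoly_quotient]

theorem charpoly_swapInvariantMatrix_eq_prod_linear {d f g x : R}
    (hf : 2 * f ^ 2 = (x + 1) * (d + 1 - x)) (hg : g ^ 2 = x * (x - d)) :
    (swapInvariantMatrix f g (-d)).charpoly =
      X * (X - C 1) * (X - C x) * (X - C (d - x)) * (X + C (d + 1)) := by
  rw [charpoly_swapInvariantMatrix, hf, hg]
  simp only [map_add, map_sub, map_mul, map_neg, map_one]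
  ring

end SwapInvariant

theorem stmt_17_general {d x : ℝ} (hd : d ≤ 0) (hx : x ∈ Set.Icc 0 (d + 1)) :
    let A := swapInvariantMatrix √((x + 1) * (d + 1 - x) / 2) √(x * (x - d)) (-d)
    0 ≤ (x + 1) * (d + 1 - x) / 2 ∧ 0 ≤ x * (x - d) ∧ (∀ i j, 0 ≤ A i j) ∧
      A.charpoly = X * (X - C 1) * (X - C x) * (X - C (d - x)) * (X + C (d + 1)) := by
  obtain ⟨hx₀, hx₁⟩ := hx
  have hf : 0 ≤ (x + 1) * (d + 1 - x) / 2 :=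
    div_nonneg (mul_nonneg (by linarith) (by linarith)) zero_le_two
  have hg : 0 ≤ x * (x - d) := mul_nonneg hx₀ (by linarith)
  have two_mul_sq_sqrt : 2 * √((x + 1) * (d + 1 - x) / 2) ^ 2 = (x + 1) * (d + 1 - x) := by
    rw [Real.sq_sqrt hf, mul_div_cancel₀ _ two_ne_zero]
  exact ⟨hf, hg,
    swapInvariantMatrix_nonneg (Real.sqrt_nonneg _) (Real.sqrt_nonneg _) (neg_nonneg.mpr hd),
    charpoly_swapInvariantMatrix_eq_prod_linear two_mul_sq_sqrt (Real.sq_sqrt hg)⟩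

theorem stmt_17 (d x : ℝ) (hd : d ∈ Set.Icc (-1/2 : ℝ) 0)
    (hx : x ∈ Set.Icc (0:ℝ) (2*d + 1)) :
    0 ≤ (x + 1)*(d + 1 - x)/2 ∧ 0 ≤ x*(x - d) ∧
    (let f₁ := Real.sqrt ((x + 1)*(d + 1 - x)/2);
     let g₁ := Real.sqrt (x*(x - d));
     let A : Matrix (Fin 5) (Fin 5) ℝ :=
       !![0,  0,  f₁, 0,  f₁;
          0,  0,  0,  0,  g₁;
          f₁, 0,  0,  g₁, -d;
          0,  0,  g₁, 0,  0;
          f₁, g₁, -d, 0,  0];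
     (∀ i j, 0 ≤ A i j) ∧
     A.charpoly = X * (X - C 1) * (X - C x) * (X - C (d - x)) * (X + C (d + 1))) := by
  exact stmt_17_general hd.2 ⟨hx.1, hx.2.trans (by linarith [hd.2])⟩
end
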